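/- arXiv:2506.23904 — 3 statements merged into one kernel-verified Lean document; each statement's English description precedes it below -/
import Mathlib

section
/- Let F = Σ_{|α|=d−1} X_α Y^α be the full Perazzo form and A_F = R/Ann_R(F) the full Perazzo algebra. Let ℓ = Σ_{|α|=d−1} a_α x_α + Σ_{j=1}^m b_j y_j ∈ [A_F]_1 and suppose either (A) there exists k ∈ {1,…,m} with b_k ≠ 0, b_i = 0 for all i ≠ k, and a_{(d−1)e_k} = 0 (where (d−1)e_k denotes the multi-index with d−1 in position k and 0 elsewhere), or (B) a_α = 0 for all α and b_j ≠ 0 for some j. Then the Jordan type of ℓ in A_F is the partition of dim_K A_F in which, for each 1 ≤ k ≤ d, the part k occurs with multiplicity exactly 2·binom(m+d−2−k, m−2) and no part exceeds d; that is, P_{ℓ,A_F} = (d^2, (d−1)^{2·binom(m−1,m−2)}, (d−2)^{2·binom(m,m−2)}, …, 1^{2·binom(m+d−3,m−2)}). -/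
open MvPolynomial

/-- The differential operator `∏_i ∂^{s i}/∂X_i^{s i}` acting on `K[X_i : i ∈ σ]`
(any order of composition gives the same operator, since partial derivatives commute). -/
noncomputable def diffOp {K : Type*} [CommSemiring K] {σ : Type*} [DecidableEq σ]
    (s : σ →₀ ℕ) : Module.End K (MvPolynomial σ K) :=
  (s.support.toList.map fun i =>
    ((MvPolynomial.pderiv i).toLinearMap : Module.End K (MvPolynomial σ K)) ^ s i).prod

/-- The apolarity (differentiation) action `f ∘ F` of a polynomial `f` on a polynomial `F`:
each variable of `f` acts as partial differentiation with respect to the corresponding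
variable of `F`. -/
noncomputable def diffAction {K : Type*} [CommSemiring K] {σ : Type*} [DecidableEq σ]
    (f F : MvPolynomial σ K) : MvPolynomial σ K :=
  ∑ s ∈ f.support, f.coeff s • diffOp s F

/-- The apolar annihilator ideal `Ann(F) = {f : f ∘ F = 0}`.  (This set is already an
ideal, so taking the ideal span does not change it.) -/
noncomputable def annIdeal {K : Type*} [CommSemiring K] {σ : Type*} [DecidableEq σ]
    (F : MvPolynomial σ K) : Ideal (MvPolynomial σ K) :=
  Ideal.span {f | diffAction f F = 0}

/-- Multi-indices `α = (i_1, …, i_m) ∈ ℕ^m` with `i_1 + ⋯ + i_m = d - 1`,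
indexing the `x`-variables of a full Perazzo algebra. -/
abbrev MIdx (m d : ℕ) := {α : Fin m → ℕ // ∑ i, α i = d - 1}

instance (m d : ℕ) : Fintype (MIdx m d) :=
  Fintype.ofFinset (Finset.Nat.antidiagonalTuple m (d - 1))
    (fun _ => Finset.Nat.mem_antidiagonalTuple)

/-- The variable index set of a full Perazzo algebra:
`x_α` for `|α| = d - 1` together with `y_1, …, y_m`. -/
abbrev PIdx (m d : ℕ) := MIdx m d ⊕ Fin m

/-- The full Perazzo form `F = ∑_{|α| = d-1} X_α Y^α`. -/
noncomputable def perazzoForm (K : Type*) [CommSemiring K] (m d : ℕ) :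
    MvPolynomial (PIdx m d) K :=
  ∑ α : MIdx m d, X (Sum.inl α) * ∏ j, X (Sum.inr j) ^ (α.1 j)

/-- The linear form `ℓ = ∑_α a_α x_α + ∑_j b_j y_j`. -/
noncomputable def linForm {K : Type*} [CommSemiring K] {m d : ℕ}
    (a : MIdx m d → K) (b : Fin m → K) : MvPolynomial (PIdx m d) K :=
  ∑ α : MIdx m d, C (a α) * X (Sum.inl α) + ∑ j, C (b j) * X (Sum.inr j)

/-- The rank of the `k`-th power of the multiplication map `×ℓ : A → A`,
as a `K`-linear endomorphism. -/
noncomputable def rkPow {K A : Type*} [Field K] [CommRing A] [Algebra K A]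
    (ℓ : A) (k : ℕ) : ℕ :=
  Module.finrank K (LinearMap.range ((LinearMap.mulLeft K ℓ) ^ k))

/-- `ℓ` has Jordan type (in the `K`-algebra `A`) given by the multiplicity function
`mult : ℕ → ℕ`: for every `k ≥ 1`, the number of Jordan blocks of size `k` of the
multiplication map `×ℓ` is `rank(×ℓ^{k-1}) - 2·rank(×ℓ^k) + rank(×ℓ^{k+1})`
(written additively to avoid truncated subtraction). -/
def IsJordanTypeMult {K A : Type*} [Field K] [CommRing A] [Algebra K A]
    (ℓ : A) (mult : ℕ → ℕ) : Prop :=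
  ∀ k : ℕ, 1 ≤ k → rkPow (K := K) ℓ (k - 1) + rkPow (K := K) ℓ (k + 1)
      = mult k + 2 * rkPow (K := K) ℓ k

/-- The multi-index `(d-1)·e_k`, with `d - 1` in position `k` and `0` elsewhere. -/
def unitIdx (m d : ℕ) (k : Fin m) : MIdx m d :=
  ⟨fun i => if i = k then d - 1 else 0, by simp⟩

/-!
Write `P = K[y_1, …, y_m]`, `𝔪 = (y_1, …, y_m)`, `B = ∑ b_j y_j` and `A = ∑ a_α Y^α`. As a module,
`A_F` is the inverse system `R ∘ F`, whose elements are the `E (p, g) = ∑ X_α (p ∘ Y^α) + g` with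
`p ∈ P` and `g` of degree less than `d`, and `E (p, g) = 0` exactly when `p ∈ 𝔪 ^ d` and `g = 0`.
In these coordinates `ℓ ^ k` sends `(p, g)` to `(B ^ k p, k (B ^ (k - 1) p ∘ A) + B ^ k ∘ g)`. As
`B ≠ 0`, the elements `B ^ k ∘ g` fill the space `P_{< d - k}` of polynomials of degree less than
`d - k`, while `B ^ k p` matters only modulo `𝔪 ^ d`, that is, `p` modulo `𝔪 ^ (d - k)`. If the
remaining term lies in `P_{< d - k}` for all `p ∈ 𝔪 ^ (d - k)`, then `ℓ ^ k` has rank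
`2 dim P_{< d - k}`, and the Jordan type follows by taking second differences. For `k < d` this is a
matter of degrees; for `k ≥ d` it needs `B ^ (d - 1) ∘ A = (d - 1)! A(b)` to vanish, and each of (A)
and (B) gives `A(b) = 0`.
-/

noncomputable section

section Apolarity

variable {R σ : Type*} [CommRing R]

theorem pderiv_commute (i j : σ) :
    Commute (pderiv (R := R) i).toLinearMap (pderiv (R := R) j).toLinearMap := by
  classical
  let D (k : σ) : Derivation R (MvPolynomial σ R) (MvPolynomial σ R) := pderiv k
  have h : ⁅D i, D j⁆ = 0 := derivation_ext fun k ↦ by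
    simp [D, Derivation.commutator_apply, pderiv_X, Pi.single_apply, apply_ite]
  rw [commute_iff_lie_eq, ← Derivation.commutator_coe_linear_map]
  exact congr(($h).toLinearMap)

variable (R σ) in
/-- The apolarity action of `MvPolynomial σ R` on itself as a homomorphism of algebras, with `X i`
acting as `∂/∂X_i`; `apolar R σ f F` is the paper's `f ∘ F`. Since `aeval` needs a commutative
target, it is built through the subalgebra of endomorphisms generated by the partial derivatives. -/
def apolar : MvPolynomial σ R →ₐ[R] Module.End R (MvPolynomial σ R) :=
  let D : σ → Module.End R (MvPolynomial σ R) := fun i ↦ (pderiv i).toLinearMap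
  haveI : IsMulCommutative (Algebra.adjoin R (Set.range D)) :=
    Algebra.isMulCommutative_adjoin R (by rintro _ ⟨i, rfl⟩ _ ⟨j, rfl⟩; exact pderiv_commute i j)
  open scoped IsMulCommutative in
  (Algebra.adjoin R (Set.range D)).val.comp
    (aeval fun i ↦ (⟨D i, Algebra.subset_adjoin ⟨i, rfl⟩⟩ : Algebra.adjoin R (Set.range D)))

@[simp]
theorem apolar_X (i : σ) : apolar R σ (X i) = (pderiv i).toLinearMap := by
  simp [apolar]

theorem apolar_X_apply (i : σ) (F : MvPolynomial σ R) : apolar R σ (X i) F = pderiv i F := by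
  simp

@[simp]
theorem apolar_C (c : R) : apolar R σ (C c) = c • 1 := by
  rw [← algebraMap_eq, AlgHom.commutes, Algebra.algebraMap_eq_smul_one]

theorem apolar_mul_apply (f g F : MvPolynomial σ R) :
    apolar R σ (f * g) F = apolar R σ f (apolar R σ g F) := by
  rw [map_mul, Module.End.mul_apply]

theorem apolar_X_pow_monomial (i : σ) (n : ℕ) (t : σ →₀ ℕ) (c : R) :
    apolar R σ (X i ^ n) (monomial t c) =
      monomial (t - Finsupp.single i n) (c * (t i).descFactorial n) := by
  induction n with
  | zero => simp
  | succ n ih =>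
    rw [pow_succ', apolar_mul_apply, ih, apolar_X_apply, pderiv_monomial, tsub_tsub,
      ← Finsupp.single_add, Nat.descFactorial_succ]
    congr 1
    simp only [Finsupp.coe_tsub, Pi.sub_apply, Finsupp.single_eq_same]
    push_cast
    ring

theorem apolar_monomial_monomial (s t : σ →₀ ℕ) (c e : R) :
    apolar R σ (monomial s c) (monomial t e) =
      monomial (t - s) (c * e * s.prod fun i n ↦ ((t i).descFactorial n : R)) := by
  induction s using Finsupp.induction generalizing c with
  | zero => simp [← C_apply, smul_monomial]
  | single_add i n s his hn ih =>
    have hprod := Finsupp.prod_add_index_of_disjoint (f1 := Finsupp.single i n) (f2 := s)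
      (by rw [Finsupp.support_single i hn]; simpa using his)
      (fun j k ↦ ((t j).descFactorial k : R))
    have hti : (t - s) i = t i := by simp [Finsupp.notMem_support_iff.1 his]
    rw [monomial_single_add, apolar_mul_apply, ih, apolar_X_pow_monomial, hti, tsub_tsub,
      add_comm s, hprod, Finsupp.prod_single_index (by simp)]
    congr 1
    ring

theorem prod_descFactorial_eq_zero {s t : σ →₀ ℕ} (hst : ¬s ≤ t) :
    (s.prod fun i n ↦ ((t i).descFactorial n : R)) = 0 := by
  obtain ⟨i, hi⟩ : ∃ i, t i < s i := by simpa [Finsupp.le_def] using hst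
  exact Finset.prod_eq_zero (i := i) (by simp; lia) (by simp [Nat.descFactorial_of_lt hi])

theorem prod_descFactorial_ne_zero [CharZero R] {s t : σ →₀ ℕ} (hst : s ≤ t) :
    (s.prod fun i n ↦ ((t i).descFactorial n : R)) ≠ 0 := by
  have hpos : 0 < s.prod fun i n ↦ (t i).descFactorial n :=
    Finset.prod_pos fun i _ ↦ Nat.descFactorial_pos.2 (hst i)
  simpa [Finsupp.prod] using Nat.cast_ne_zero (R := R).2 hpos.ne'

theorem coeff_apolar_monomial {s t : σ →₀ ℕ} (hst : s ≤ t) (p : MvPolynomial σ R) (e : R) :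
    coeff (t - s) (apolar R σ p (monomial t e)) =
      coeff s p * e * s.prod fun i n ↦ ((t i).descFactorial n : R) := by
  classical
  induction p using MvPolynomial.induction_on' with
  | monomial u c =>
    rw [apolar_monomial_monomial, coeff_monomial, coeff_monomial]
    by_cases hus : u = s
    · simp [hus]
    by_cases hut : u ≤ t
    · rw [if_neg hus, if_neg fun h ↦ hus ((tsub_right_inj hut hst).1 h), zero_mul, zero_mul]
    · simp [hus, prod_descFactorial_eq_zero hut]
  | add p q hp hq => simp [hp, hq, add_mul]

section DiffAction

variable [DecidableEq σ]

theorem diffOp_eq_apolar (s : σ →₀ ℕ) : diffOp s = apolar R σ (monomial s 1) := by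
  rw [monomial_eq, C_1, one_mul, Finsupp.prod, ← Finset.prod_map_toList, map_list_prod,
    List.map_map, diffOp]
  simp [Function.comp_def]

theorem diffAction_eq_apolar (f F : MvPolynomial σ R) : diffAction f F = apolar R σ f F := by
  conv_rhs => rw [f.as_sum]
  simp only [diffAction, diffOp_eq_apolar, map_sum, LinearMap.sum_apply]
  refine Finset.sum_congr rfl fun s _ ↦ ?_
  rw [← LinearMap.smul_apply, ← map_smul, smul_monomial, smul_eq_mul, mul_one]

theorem mem_annIdeal {f F : MvPolynomial σ R} : f ∈ annIdeal F ↔ apolar R σ f F = 0 := by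
  refine ⟨fun hf ↦ ?_, fun hf ↦ Ideal.subset_span (by simpa [diffAction_eq_apolar] using hf)⟩
  induction hf using Submodule.span_induction with
  | mem f hf => simpa [diffAction_eq_apolar] using hf
  | zero => simp
  | add f g _ _ hf hg => simp [hf, hg]
  | smul a f _ hf => rw [smul_eq_mul, apolar_mul_apply, hf, map_zero]

end DiffAction

variable (R) in
/-- The Macaulay inverse system `R ∘ F` of a form `F`, isomorphic to `A_F` as a module. -/
def inverseSystem (F : MvPolynomial σ R) : Submodule R (MvPolynomial σ R) :=
  LinearMap.range ((apolar R σ).toLinearMap.flip F)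

theorem apolar_mem_inverseSystem (f F : MvPolynomial σ R) : apolar R σ f F ∈ inverseSystem R F :=
  ⟨f, rfl⟩

theorem inverseSystem_le {F : MvPolynomial σ R} {W : Submodule R (MvPolynomial σ R)} (hF : F ∈ W)
    (hW : ∀ i, ∀ G ∈ W, pderiv i G ∈ W) : inverseSystem R F ≤ W := by
  rintro _ ⟨f, rfl⟩
  change apolar R σ f F ∈ W
  induction f using MvPolynomial.induction_on with
  | C c => simpa using W.smul_mem c hF
  | add f g hf hg => simpa using W.add_mem hf hg
  | mul_X f i hf => rw [mul_comm, apolar_mul_apply]; simpa using hW i _ hf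

end Apolarity

theorem rkPow_mk_annIdeal {K σ : Type*} [Field K] [DecidableEq σ] (F L : MvPolynomial σ K) (k : ℕ) :
    rkPow (K := K) (Ideal.Quotient.mk (annIdeal F) L) k =
      Module.finrank K ((inverseSystem K F).map (apolar K σ (L ^ k))) := by
  let mulL := (LinearMap.mulLeft K (Ideal.Quotient.mk (annIdeal F) (L ^ k))).comp
    (Ideal.Quotient.mkₐ K (annIdeal F)).toLinearMap
  let actL := (apolar K σ (L ^ k)).comp ((apolar K σ).toLinearMap.flip F)
  have hrange : LinearMap.range mulL =
      LinearMap.range (LinearMap.mulLeft K (Ideal.Quotient.mk (annIdeal F) (L ^ k))) :=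
    LinearMap.range_comp_of_range_eq_top _
      (LinearMap.range_eq_top.2 (Ideal.Quotient.mkₐ_surjective K _))
  have hker : LinearMap.ker mulL = LinearMap.ker actL := by
    ext f
    change Ideal.Quotient.mk (annIdeal F) (L ^ k) * Ideal.Quotient.mk (annIdeal F) f = 0 ↔
      apolar K σ (L ^ k) (apolar K σ f F) = 0
    rw [← map_mul, Ideal.Quotient.eq_zero_iff_mem, mem_annIdeal, apolar_mul_apply]
  rw [rkPow, LinearMap.pow_mulLeft, ← map_pow, ← hrange, inverseSystem, ← LinearMap.range_comp]
  exact (mulL.quotKerEquivRange.symm.trans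
    ((Submodule.quotEquivOfEq _ _ hker).trans actL.quotKerEquivRange)).finrank_eq

section Degree

variable (R σ : Type*) [CommRing R]

/-- The polynomials of total degree less than `n`. Unlike Mathlib's `restrictTotalDegree`, the bound
is strict, so that the space is trivial for `n = 0`. -/
def degreeLT (n : ℕ) : Submodule R (MvPolynomial σ R) :=
  restrictSupport R {s | s.degree < n}

variable {R σ}

theorem mem_degreeLT {n : ℕ} {p : MvPolynomial σ R} :
    p ∈ degreeLT R σ n ↔ ∀ s ∈ p.support, s.degree < n :=
  .rfl

@[simp]
theorem degreeLT_zero : degreeLT R σ 0 = ⊥ := by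
  simp [degreeLT, restrictSupport_eq_span]

theorem degreeLT_mono : Monotone (degreeLT R σ) :=
  fun _ _ h ↦ restrictSupport_mono R fun _ hs ↦ lt_of_lt_of_le hs h

theorem mem_degreeLT_of_isHomogeneous {p : MvPolynomial σ R} {k n : ℕ} (hp : p.IsHomogeneous k)
    (hkn : k < n) : p ∈ degreeLT R σ n :=
  mem_degreeLT.2 fun _ hs ↦ (hp.degree_eq_sum_deg_support hs).symm.trans_lt hkn

theorem mul_mem_degreeLT_of_isHomogeneous {f g : MvPolynomial σ R} {k n : ℕ}
    (hf : f.IsHomogeneous k) (hg : g ∈ degreeLT R σ n) : f * g ∈ degreeLT R σ (k + n) := by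
  classical
  refine mem_degreeLT.2 fun s hs ↦ ?_
  obtain ⟨u, hu, v, hv, rfl⟩ := Finset.mem_add.1 (support_mul f g hs)
  have hu_degree : u.degree = k := (hf.degree_eq_sum_deg_support hu).symm
  rw [map_add, hu_degree]
  exact Nat.add_lt_add_left (mem_degreeLT.1 hg v hv) k

theorem isCompl_degreeLT_pow_idealOfVars (n : ℕ) :
    IsCompl (degreeLT R σ n) ((idealOfVars σ R ^ n).restrictScalars R) := by
  constructor
  · refine Submodule.disjoint_def.2 fun p hp hp' ↦ support_eq_empty.1 ?_
    refine Finset.eq_empty_of_forall_notMem fun s hs ↦ ?_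
    exact (mem_degreeLT.1 hp s hs).not_ge ((mem_pow_idealOfVars_iff n p).1 hp' s hs)
  · refine codisjoint_iff.2 (eq_top_iff.2 fun p _ ↦ ?_)
    rw [p.as_sum]
    refine Submodule.sum_mem _ fun s _ ↦ ?_
    rcases lt_or_ge s.degree n with hs | hs
    · exact Submodule.mem_sup_left ((monomial_mem_restrictSupport R).2 (.inl hs))
    · refine Submodule.mem_sup_right ((mem_pow_idealOfVars_iff n _).2 fun t ht ↦ ?_)
      rwa [Finset.mem_singleton.1 (support_monomial_subset ht)]

theorem apolar_mem_degreeLT {r n : ℕ} {p g : MvPolynomial σ R} (hp : p ∈ idealOfVars σ R ^ r)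
    (hg : g ∈ degreeLT R σ n) : apolar R σ p g ∈ degreeLT R σ (n - r) := by
  rw [p.as_sum, g.as_sum]
  simp only [map_sum, LinearMap.sum_apply, apolar_monomial_monomial]
  refine Submodule.sum_mem _ fun t ht ↦ Submodule.sum_mem _ fun s hs ↦
    (monomial_mem_restrictSupport R).2 ?_
  by_cases hst : s ≤ t
  · have hdegree : (t - s).degree + s.degree = t.degree := by
      rw [← map_add, tsub_add_cancel_of_le hst]
    have hs_ge : r ≤ s.degree := (mem_pow_idealOfVars_iff r p).1 hp s hs
    have ht_lt : t.degree < n := mem_degreeLT.1 hg t ht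
    exact .inl (by change (t - s).degree < n - r; lia)
  · exact .inr (by rw [prod_descFactorial_eq_zero hst, mul_zero])

instance [Finite σ] (n : ℕ) : Module.Finite R (degreeLT R σ n) :=
  have : Finite {s : σ →₀ ℕ | s.degree < n} := Finsupp.finite_of_degree_lt n
  .of_basis (basisRestrictSupport R {s : σ →₀ ℕ | s.degree < n})

theorem finrank_degreeLT [StrongRankCondition R] [Fintype σ] [Nonempty σ] (n : ℕ) :
    Module.finrank R (degreeLT R σ n) =
      (Fintype.card σ + n - 1).choose (Fintype.card σ) := by
  classical
  let exponents (j : ℕ) : Finset (σ →₀ ℕ) := Finset.univ.finsuppAntidiag j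
  have hdisj : ((Finset.range n : Finset ℕ) : Set ℕ).PairwiseDisjoint exponents :=
    fun i _ j _ hij ↦ Finset.disjoint_left.2 fun s hi hj ↦
      hij ((Finset.mem_finsuppAntidiag.1 hi).1.symm.trans (Finset.mem_finsuppAntidiag.1 hj).1)
  have hset : {s : σ →₀ ℕ | s.degree < n} =
      ((Finset.range n).biUnion exponents : Set (σ →₀ ℕ)) := by
    ext s
    simp [exponents, Finsupp.degree_eq_sum, Finset.mem_finsuppAntidiag]
  rw [degreeLT, Module.finrank_eq_nat_card_basis (basisRestrictSupport R _), hset,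
    Nat.card_coe_set_eq, Set.ncard_coe_finset, Finset.card_biUnion hdisj]
  obtain ⟨N, hN⟩ := Nat.exists_eq_add_of_le' (Fintype.card_pos (α := σ))
  have hockeyStick : ∑ j ∈ Finset.range n, (N + j).choose j = (N + n).choose (N + 1) := by
    clear * -
    induction n with
    | zero => simp
    | succ n ih =>
      rw [Finset.sum_range_succ, ih, ← Nat.choose_symm_add (a := N), add_comm, ← add_assoc,
        Nat.choose_succ_succ]
  simpa [exponents, Finset.card_finsuppAntidiag_nat_eq_choose, hN, add_right_comm N 1]

end Degree

section LinearForm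

-- A truncated Taylor expansion at `s = 0`: it integrates `h` along a coordinate `s` of `D`.
theorem derivation_sum_smul_pow_mul_iterate {K A : Type*} [Field K] [CharZero K] [CommRing A]
    [Algebra K A] (D : Derivation K A A) {s : A} (hs : D s = 1) (h : A) (n : ℕ) :
    D (∑ i ∈ Finset.range n, ((-1) ^ i / (i + 1).factorial : K) • (s ^ (i + 1) * D^[i] h)) =
      h - ((-1) ^ n / n.factorial : K) • (s ^ n * D^[n] h) := by
  induction n with
  | zero => simp
  | succ n ih =>
    have hleibniz : D (s ^ (n + 1) * D^[n] h) =
        s ^ (n + 1) * D^[n + 1] h + ((n + 1 : ℕ) : K) • (s ^ n * D^[n] h) := by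
      rw [D.leibniz, D.leibniz_pow, hs, Function.iterate_succ_apply', Nat.cast_smul_eq_nsmul]
      simp [mul_comm, mul_left_comm, mul_assoc]
    have hfactorial : ((-1) ^ n / (n + 1).factorial : K) * (n + 1 : ℕ) =
        (-1) ^ n / n.factorial := by
      have := Nat.cast_ne_zero (R := K).2 n.factorial_ne_zero
      have := Nat.cast_ne_zero (R := K).2 n.succ_ne_zero
      rw [Nat.factorial_succ]
      push_cast at *
      field_simp
    rw [Finset.sum_range_succ, map_add, ih, D.map_smul, hleibniz, smul_add, smul_smul, hfactorial,
      pow_succ (-1 : K)]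
    simp only [mul_neg, mul_one, neg_div, neg_smul]
    abel

variable {R σ : Type*} [CommRing R] [Fintype σ]

/-- The linear form `∑ j, b j * X j`. -/
def linearPoly (b : σ → R) : MvPolynomial σ R :=
  ∑ j, C (b j) * X j

theorem isHomogeneous_linearPoly (b : σ → R) : (linearPoly b).IsHomogeneous 1 :=
  .sum _ _ _ fun j _ ↦ isHomogeneous_C_mul_X (b j) j

theorem linearPoly_ne_zero {b : σ → R} (hb : b ≠ 0) : linearPoly b ≠ 0 := by
  classical
  obtain ⟨j, hj⟩ := Function.ne_iff.1 hb
  refine ne_zero_iff.2 ⟨Finsupp.single j 1, ?_⟩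
  simpa [linearPoly, coeff_sum, coeff_C_mul, coeff_X, Finsupp.single_left_inj] using hj

theorem linearPoly_mem_idealOfVars (b : σ → R) : linearPoly b ∈ idealOfVars σ R :=
  Ideal.sum_mem _ fun j _ ↦ Ideal.mul_mem_left _ _ (Ideal.subset_span ⟨j, rfl⟩)

theorem apolar_linearPoly (b : σ → R) :
    apolar R σ (linearPoly b) = (mkDerivation R fun j ↦ C (b j)).toLinearMap := by
  classical
  have hsum (f : MvPolynomial σ R) :
      (∑ j, b j • pderiv j : Derivation R (MvPolynomial σ R) (MvPolynomial σ R)) f =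
        ∑ j, b j • pderiv j f := by
    rw [← Derivation.coeFnAddMonoidHom_apply, map_sum]
    simp
  have hmk : ∑ j, b j • pderiv j = mkDerivation R fun j ↦ C (b j) := derivation_ext fun i ↦ by
    simp [hsum, pderiv_X, Pi.single_apply, smul_eq_C_mul, mkDerivation_X]
  refine LinearMap.ext fun f ↦ ?_
  rw [← hmk]
  simp [linearPoly, LinearMap.sum_apply, hsum]

theorem apolar_linearPoly_pow_isHomogeneous (b : σ → R) {n : ℕ} {f : MvPolynomial σ R}
    (hf : f.IsHomogeneous n) :
    apolar R σ (linearPoly b ^ n) f = C (n.factorial * eval b f) := by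
  induction n generalizing f with
  | zero =>
    rw [← totalDegree_zero_iff_isHomogeneous, totalDegree_eq_zero_iff_eq_C] at hf
    rw [hf]
    simp
  | succ n ih =>
    have hderiv : apolar R σ (linearPoly b) f = ∑ j, C (b j) * pderiv j f := by
      simp [linearPoly, LinearMap.sum_apply, smul_eq_C_mul]
    have hhom : (∑ j, C (b j) * pderiv j f).IsHomogeneous n :=
      .sum _ _ _ fun j _ ↦ hf.pderiv.C_mul (b j)
    have heuler : eval b (∑ j, C (b j) * pderiv j f) = (n + 1) * eval b f := by
      simpa using congr(eval b $(hf.sum_X_mul_pderiv))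
    rw [pow_succ, apolar_mul_apply, hderiv, ih hhom, heuler, Nat.factorial_succ]
    push_cast
    ring_nf

theorem apolar_linearPoly_pow_mem_degreeLT (b : σ → R) (k : ℕ) {n : ℕ} {g : MvPolynomial σ R}
    (hg : g ∈ degreeLT R σ n) : apolar R σ (linearPoly b ^ k) g ∈ degreeLT R σ (n - k) :=
  apolar_mem_degreeLT (Ideal.pow_mem_pow (linearPoly_mem_idealOfVars b) k) hg

theorem exists_apolar_linearPoly_eq {K : Type*} [Field K] [CharZero K] {b : σ → K} (hb : b ≠ 0)
    {n : ℕ} {h : MvPolynomial σ K} (hh : h ∈ degreeLT K σ n) :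
    ∃ g ∈ degreeLT K σ (n + 1), apolar K σ (linearPoly b) g = h := by
  obtain ⟨j, hj⟩ := Function.ne_iff.1 hb
  let D := mkDerivation K fun j ↦ (C (b j) : MvPolynomial σ K)
  let s : MvPolynomial σ K := C (b j)⁻¹ * X j
  have hs : D s = 1 := by simp [D, s, mkDerivation_X, ← C_mul, inv_mul_cancel₀ hj]
  have hiterate (i : ℕ) : D^[i] h ∈ degreeLT K σ (n - i) := by
    have := apolar_linearPoly_pow_mem_degreeLT b i hh
    rwa [map_pow, apolar_linearPoly, Module.End.pow_apply] at this
  have hnilpotent : D^[n] h = 0 := by simpa using hiterate n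
  refine ⟨_, Submodule.sum_mem _ fun i hi ↦ Submodule.smul_mem _ _ ?_, by
    rw [apolar_linearPoly]
    exact (derivation_sum_smul_pow_mul_iterate D hs h n).trans (by simp [hnilpotent])⟩
  have hdegree : i + 1 + (n - i) = n + 1 := by have := Finset.mem_range.1 hi; lia
  simpa only [one_mul, hdegree] using mul_mem_degreeLT_of_isHomogeneous
    ((isHomogeneous_C_mul_X (b j)⁻¹ j).pow (i + 1)) (hiterate i)

theorem map_apolar_linearPoly_pow_degreeLT {K : Type*} [Field K] [CharZero K] {b : σ → K}
    (hb : b ≠ 0) (k n : ℕ) :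
    (degreeLT K σ n).map (apolar K σ (linearPoly b ^ k)) = degreeLT K σ (n - k) := by
  induction k generalizing n with
  | zero => simp [Module.End.one_eq_id]
  | succ k ih =>
    rw [pow_succ, map_mul, Module.End.mul_eq_comp, Submodule.map_comp]
    have hmap : (degreeLT K σ n).map (apolar K σ (linearPoly b)) = degreeLT K σ (n - 1) := by
      refine le_antisymm (Submodule.map_le_iff_le_comap.2 fun g hg ↦ ?_) fun h hh ↦ ?_
      · simpa using apolar_linearPoly_pow_mem_degreeLT b 1 hg
      · cases n with
        | zero => simp_all
        | succ n => exact exists_apolar_linearPoly_eq hb hh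
    rw [hmap, ih, Nat.sub_sub, add_comm]

end LinearForm

section Perazzo

variable {R : Type*} [CommRing R] {m d : ℕ}

/-- The multi-index `α` as the exponent of the monomial `Y^α`. -/
def exponent (α : MIdx m d) : Fin m →₀ ℕ :=
  Finsupp.equivFunOnFinite.symm α.1

theorem degree_exponent (α : MIdx m d) : (exponent α).degree = d - 1 :=
  (Finsupp.degree_eq_sum _).trans α.2

theorem exists_le_exponent [NeZero m] {s : Fin m →₀ ℕ} (hs : s.degree < d) :
    ∃ α : MIdx m d, s ≤ exponent α := by
  let t := s + Finsupp.single 0 (d - 1 - s.degree)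
  refine ⟨⟨t, ?_⟩, fun i ↦ le_self_add (a := s i)⟩
  rw [← Finsupp.degree_eq_sum, map_add, Finsupp.degree_single]
  lia

variable (R) in
/-- The monomial `Y^α`. -/
def yMonomial (α : MIdx m d) : MvPolynomial (Fin m) R :=
  monomial (exponent α) 1

theorem yMonomial_eq_prod (α : MIdx m d) : yMonomial R α = ∏ j, X j ^ α.1 j := by
  rw [yMonomial, monomial_eq, Finsupp.prod_fintype _ _ (by simp)]
  simp [exponent]

theorem isHomogeneous_yMonomial (α : MIdx m d) : (yMonomial R α).IsHomogeneous (d - 1) :=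
  isHomogeneous_monomial _ (degree_exponent α)

theorem yMonomial_mem_degreeLT [NeZero d] (α : MIdx m d) :
    yMonomial R α ∈ degreeLT R (Fin m) d :=
  mem_degreeLT_of_isHomogeneous (isHomogeneous_yMonomial α) (Nat.pred_lt (NeZero.ne d))

theorem forall_apolar_yMonomial_eq_zero_iff [CharZero R] [NoZeroDivisors R] [NeZero m] [NeZero d]
    {p : MvPolynomial (Fin m) R} :
    (∀ α : MIdx m d, apolar R (Fin m) p (yMonomial R α) = 0) ↔
      p ∈ idealOfVars (Fin m) R ^ d := by
  refine ⟨fun h ↦ (mem_pow_idealOfVars_iff d p).2 fun s hs ↦ ?_, fun hp α ↦ ?_⟩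
  · by_contra! hlt
    obtain ⟨α, hα⟩ := exists_le_exponent hlt
    have hcoeff := coeff_apolar_monomial hα p (1 : R)
    rw [← yMonomial, h α, coeff_zero, mul_one] at hcoeff
    exact mul_ne_zero (mem_support_iff.1 hs) (prod_descFactorial_ne_zero hα) hcoeff.symm
  · simpa using apolar_mem_degreeLT hp (yMonomial_mem_degreeLT α)

variable (R m d) in
/-- The map `(p, g) ↦ ∑ α, X_α (p ∘ Y^α) + g` from pairs of polynomials in the `y`-variables. It
sends `(1, 0)` to the Perazzo form and parametrizes its inverse system. -/
def perazzoParam :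
    MvPolynomial (Fin m) R × MvPolynomial (Fin m) R →ₗ[R] MvPolynomial (PIdx m d) R :=
  let ι : MvPolynomial (Fin m) R →ₗ[R] MvPolynomial (PIdx m d) R := (rename Sum.inr).toLinearMap
  LinearMap.coprod
    (∑ α, LinearMap.mulLeft R (X (Sum.inl α)) ∘ₗ ι ∘ₗ
      (apolar R (Fin m)).toLinearMap.flip (yMonomial R α)) ι

theorem perazzoParam_apply (p g : MvPolynomial (Fin m) R) :
    perazzoParam R m d (p, g) =
      ∑ α, X (Sum.inl α) * rename Sum.inr (apolar R (Fin m) p (yMonomial R α)) +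
        rename Sum.inr g := by
  simp [perazzoParam, LinearMap.sum_apply]

theorem perazzoParam_one_zero : perazzoParam R m d (1, 0) = perazzoForm R m d := by
  simp [perazzoParam_apply, perazzoForm, yMonomial_eq_prod]

theorem pderiv_inl_rename_inr (α : MIdx m d) (g : MvPolynomial (Fin m) R) :
    pderiv (Sum.inl α) (rename Sum.inr g : MvPolynomial (PIdx m d) R) = 0 := by
  classical
  refine pderiv_eq_zero_of_notMem_vars fun h ↦ ?_
  simpa using vars_rename _ _ h

theorem pderiv_inl_perazzoParam (α : MIdx m d) (p g : MvPolynomial (Fin m) R) :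
    pderiv (Sum.inl α) (perazzoParam R m d (p, g)) =
      perazzoParam R m d (0, apolar R (Fin m) p (yMonomial R α)) := by
  classical
  simp [perazzoParam_apply, pderiv_inl_rename_inr, pderiv_X, Pi.single_apply]

theorem pderiv_inr_perazzoParam (j : Fin m) (p g : MvPolynomial (Fin m) R) :
    pderiv (Sum.inr j) (perazzoParam R m d (p, g)) =
      perazzoParam R m d (X j * p, pderiv j g) := by
  have hrename (q : MvPolynomial (Fin m) R) :
      pderiv (Sum.inr j) (rename Sum.inr q : MvPolynomial (PIdx m d) R) =
        rename Sum.inr (pderiv j q) :=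
    pderiv_rename Sum.inr_injective j q
  simp [perazzoParam_apply, hrename]

theorem apolar_rename_perazzoParam (q p g : MvPolynomial (Fin m) R) :
    apolar R (PIdx m d) (rename Sum.inr q) (perazzoParam R m d (p, g)) =
      perazzoParam R m d (q * p, apolar R (Fin m) q g) := by
  induction q using MvPolynomial.induction_on generalizing p g with
  | C c => simp [← map_smul, C_mul']
  | add q r hq hr =>
    rw [map_add, map_add, LinearMap.add_apply, hq, hr, ← map_add, add_mul, map_add (apolar R _)]
    rfl
  | mul_X q j hq =>
    rw [map_mul, apolar_mul_apply, rename_X, apolar_X_apply, pderiv_inr_perazzoParam, hq, mul_assoc,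
      apolar_mul_apply, apolar_X_apply]

theorem perazzoParam_eq_zero_iff [CharZero R] [NoZeroDivisors R] [NeZero m] [NeZero d]
    {p g : MvPolynomial (Fin m) R} :
    perazzoParam R m d (p, g) = 0 ↔ p ∈ idealOfVars (Fin m) R ^ d ∧ g = 0 := by
  rw [← forall_apolar_yMonomial_eq_zero_iff]
  refine ⟨fun h ↦ ?_, fun ⟨hp, hg⟩ ↦ by simp [perazzoParam_apply, hp, hg]⟩
  have hrename : Function.Injective (rename Sum.inr : _ → MvPolynomial (PIdx m d) R) :=
    rename_injective _ Sum.inr_injective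
  have hp (α : MIdx m d) : apolar R (Fin m) p (yMonomial R α) = 0 := hrename <| by
    simpa [h, perazzoParam_apply, eq_comm] using pderiv_inl_perazzoParam α p g
  exact ⟨hp, hrename <| by simpa [perazzoParam_apply, hp] using h⟩

/-- The form `∑ α, a α * Y^α` of degree `d - 1`: the `x`-part of a linear form acts on
`perazzoParam` through its derivatives. -/
def coeffForm (a : MIdx m d → R) : MvPolynomial (Fin m) R :=
  ∑ α, a α • yMonomial R α

theorem isHomogeneous_coeffForm (a : MIdx m d → R) : (coeffForm a).IsHomogeneous (d - 1) := by
  simp only [coeffForm, smul_eq_C_mul]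
  exact .sum _ _ _ fun α _ ↦ (isHomogeneous_yMonomial α).C_mul (a α)

theorem eval_coeffForm (a : MIdx m d → R) (b : Fin m → R) :
    eval b (coeffForm a) = ∑ α, a α * ∏ j, b j ^ α.1 j := by
  simp [coeffForm, yMonomial_eq_prod]

theorem apolar_linForm_perazzoParam (a : MIdx m d → R) (b : Fin m → R)
    (p g : MvPolynomial (Fin m) R) :
    apolar R (PIdx m d) (linForm a b) (perazzoParam R m d (p, g)) =
      perazzoParam R m d (linearPoly b * p,
        apolar R (Fin m) p (coeffForm a) + apolar R (Fin m) (linearPoly b) g) := by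
  have hx : apolar R (PIdx m d) (∑ α, C (a α) * X (Sum.inl α)) (perazzoParam R m d (p, g)) =
      perazzoParam R m d (0, apolar R (Fin m) p (coeffForm a)) := by
    have hinr (q : MvPolynomial (Fin m) R) : perazzoParam R m d (0, q) = rename Sum.inr q := by
      simp [perazzoParam_apply]
    simp [LinearMap.sum_apply, pderiv_inl_perazzoParam, hinr, coeffForm]
  have hy : ∑ j, C (b j) * X (Sum.inr j) =
      (rename Sum.inr (linearPoly b) : MvPolynomial (PIdx m d) R) := by
    simp [linearPoly]
  rw [linForm, hy, map_add, LinearMap.add_apply, hx, apolar_rename_perazzoParam, ← map_add]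
  simp

/-- The map `(p, h) ↦ (B ^ k * p, k • ((B ^ (k - 1) * p) ∘ A) + h)` with `B = linearPoly b` and
`A = coeffForm a`, which describes `ℓ ^ k` in the parametrization `perazzoParam`. -/
def perazzoShear (a : MIdx m d → R) (b : Fin m → R) (k : ℕ) :
    Module.End R (MvPolynomial (Fin m) R × MvPolynomial (Fin m) R) :=
  let shear : MvPolynomial (Fin m) R →ₗ[R] MvPolynomial (Fin m) R :=
    (apolar R (Fin m)).toLinearMap.flip (coeffForm a) ∘ₗ
      LinearMap.mulLeft R (linearPoly b ^ (k - 1))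
  (LinearMap.mulLeft R (linearPoly b ^ k) ∘ₗ LinearMap.fst R _ _).prod
    ((k • shear).coprod LinearMap.id)

theorem perazzoShear_apply (a : MIdx m d → R) (b : Fin m → R) (k : ℕ)
    (p h : MvPolynomial (Fin m) R) :
    perazzoShear a b k (p, h) = (linearPoly b ^ k * p,
      k • apolar R (Fin m) (linearPoly b ^ (k - 1) * p) (coeffForm a) + h) :=
  rfl

theorem apolar_linForm_pow_perazzoParam (a : MIdx m d → R) (b : Fin m → R) (k : ℕ)
    (p g : MvPolynomial (Fin m) R) :
    apolar R (PIdx m d) (linForm a b ^ k) (perazzoParam R m d (p, g)) =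
      perazzoParam R m d (perazzoShear a b k (p, apolar R (Fin m) (linearPoly b ^ k) g)) := by
  induction k with
  | zero => simp [perazzoShear_apply]
  | succ k ih =>
    have hcount : k • apolar R (Fin m) (linearPoly b * (linearPoly b ^ (k - 1) * p)) (coeffForm a) =
        k • apolar R (Fin m) (linearPoly b ^ k * p) (coeffForm a) := by
      cases k with
      | zero => simp
      | succ k => rw [Nat.add_sub_cancel, ← mul_assoc, ← pow_succ']
    rw [pow_succ', apolar_mul_apply, ih, perazzoShear_apply, apolar_linForm_perazzoParam,
      perazzoShear_apply, map_add, map_nsmul, ← apolar_mul_apply, ← apolar_mul_apply, hcount,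
      ← mul_assoc, ← pow_succ', ← add_assoc, succ_nsmul', Nat.add_sub_cancel]

theorem smul_apolar_coeffForm_mem_degreeLT [NeZero d] {a : MIdx m d → R} {b : Fin m → R}
    (hab : eval b (coeffForm a) = 0) (k : ℕ) {q : MvPolynomial (Fin m) R}
    (hq : q ∈ idealOfVars (Fin m) R ^ (d - k)) :
    k • apolar R (Fin m) (linearPoly b ^ (k - 1) * q) (coeffForm a) ∈
      degreeLT R (Fin m) (d - k) := by
  rcases Nat.eq_zero_or_pos k with rfl | hk
  · simp
  refine Submodule.smul_of_tower_mem _ _ ?_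
  rcases lt_or_ge k d with hkd | hdk
  · have hA : coeffForm a ∈ degreeLT R (Fin m) d :=
      mem_degreeLT_of_isHomogeneous (isHomogeneous_coeffForm a) (Nat.pred_lt (NeZero.ne d))
    rw [mul_comm, apolar_mul_apply]
    exact degreeLT_mono (by lia)
      (apolar_mem_degreeLT hq (apolar_linearPoly_pow_mem_degreeLT b (k - 1) hA))
  · have hpow : apolar R (Fin m) (linearPoly b ^ (d - 1)) (coeffForm a) = 0 := by
      rw [apolar_linearPoly_pow_isHomogeneous b (isHomogeneous_coeffForm a), hab]
      simp
    obtain ⟨e, he⟩ := Nat.exists_eq_add_of_le' (Nat.sub_le_sub_right hdk 1)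
    rw [he, pow_add, mul_right_comm, apolar_mul_apply, hpow, map_zero]
    exact zero_mem _

variable {K : Type*} [Field K] [CharZero K] [NeZero m]

theorem perazzoParam_zero_monomial_mem_inverseSystem {s : Fin m →₀ ℕ} (hs : s.degree < d) :
    perazzoParam K m d (0, monomial s 1) ∈ inverseSystem K (perazzoForm K m d) := by
  obtain ⟨α, hα⟩ := exists_le_exponent hs
  let c : K := (exponent α - s).prod fun i n ↦ ((exponent α i).descFactorial n : K)
  have hc : c ≠ 0 := prod_descFactorial_ne_zero tsub_le_self
  have hy : apolar K (Fin m) (monomial (exponent α - s) c⁻¹) (yMonomial K α) = monomial s 1 := by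
    rw [yMonomial, apolar_monomial_monomial, tsub_tsub_cancel_of_le hα, mul_one,
      inv_mul_cancel₀ hc]
  have hmem := apolar_mem_inverseSystem
    (rename Sum.inr (monomial (exponent α - s) c⁻¹) * X (Sum.inl α)) (perazzoForm K m d)
  rwa [← perazzoParam_one_zero, apolar_mul_apply, apolar_X_apply, pderiv_inl_perazzoParam,
    apolar_rename_perazzoParam, map_one, Module.End.one_apply, hy, mul_zero,
    perazzoParam_one_zero] at hmem

theorem degreeLT_le_comap_inverseSystem :
    degreeLT K (Fin m) d ≤ (inverseSystem K (perazzoForm K m d)).comap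
      (perazzoParam K m d ∘ₗ LinearMap.inr K _ _) := by
  rw [degreeLT, restrictSupport_eq_span, Submodule.span_le]
  rintro _ ⟨s, hs, rfl⟩
  exact perazzoParam_zero_monomial_mem_inverseSystem hs

variable [NeZero d]

theorem inverseSystem_perazzoForm :
    inverseSystem K (perazzoForm K m d) =
      (Submodule.prod ⊤ (degreeLT K (Fin m) d)).map (perazzoParam K m d) := by
  refine le_antisymm (inverseSystem_le ⟨(1, 0), by simp, perazzoParam_one_zero⟩ ?_) ?_
  · have hstable (f : MvPolynomial (Fin m) K) {g : MvPolynomial (Fin m) K}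
        (hg : g ∈ degreeLT K (Fin m) d) : apolar K (Fin m) f g ∈ degreeLT K (Fin m) d :=
      apolar_mem_degreeLT (r := 0) (by simp) hg
    rintro (α | j) _ ⟨⟨p, g⟩, ⟨-, hg⟩, rfl⟩
    · exact ⟨_, ⟨trivial, hstable p (yMonomial_mem_degreeLT α)⟩,
        (pderiv_inl_perazzoParam α p g).symm⟩
    · exact ⟨_, ⟨trivial, by simpa using hstable (X j) hg⟩, (pderiv_inr_perazzoParam j p g).symm⟩
  · rintro _ ⟨⟨p, g⟩, ⟨-, hg⟩, rfl⟩
    have hp : perazzoParam K m d (p, 0) ∈ inverseSystem K (perazzoForm K m d) :=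
      ⟨rename Sum.inr p, by simp [← perazzoParam_one_zero, apolar_rename_perazzoParam]⟩
    simpa [← map_add] using add_mem hp (degreeLT_le_comap_inverseSystem hg)

variable {a : MIdx m d → K} {b : Fin m → K}

theorem map_perazzoShear_top_prod_degreeLT (hab : eval b (coeffForm a) = 0) (k : ℕ) :
    (Submodule.prod ⊤ (degreeLT K (Fin m) (d - k))).map
        (perazzoParam K m d ∘ₗ perazzoShear a b k) =
      ((degreeLT K (Fin m) (d - k)).prod (degreeLT K (Fin m) (d - k))).map
        (perazzoParam K m d ∘ₗ perazzoShear a b k) := by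
  refine le_antisymm ?_ (Submodule.map_mono (Submodule.prod_mono le_top le_rfl))
  rintro _ ⟨⟨p, h⟩, ⟨-, hh⟩, rfl⟩
  obtain ⟨p', hp', q, hq, rfl⟩ := Submodule.mem_sup.1
    ((isCompl_degreeLT_pow_idealOfVars (d - k)).sup_eq_top.ge (Submodule.mem_top (x := p)))
  have hshear := smul_apolar_coeffForm_mem_degreeLT hab k hq
  have hmul : linearPoly b ^ k * q ∈ idealOfVars (Fin m) K ^ d :=
    Ideal.pow_le_pow_right (by lia) <| pow_add (idealOfVars (Fin m) K) k (d - k) ▸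
      Ideal.mul_mem_mul (Ideal.pow_mem_pow (linearPoly_mem_idealOfVars b) k) hq
  refine ⟨(p', k • apolar K (Fin m) (linearPoly b ^ (k - 1) * q) (coeffForm a) + h),
    ⟨hp', add_mem hshear hh⟩, ?_⟩
  rw [LinearMap.comp_apply, LinearMap.comp_apply, eq_comm, ← sub_eq_zero, ← map_sub,
    perazzoShear_apply, perazzoShear_apply, Prod.mk_sub_mk, perazzoParam_eq_zero_iff]
  constructor
  · rwa [mul_add, add_sub_cancel_left]
  · rw [mul_add, map_add, LinearMap.add_apply, smul_add]
    abel

theorem map_apolar_linForm_pow_inverseSystem (hb : b ≠ 0) (hab : eval b (coeffForm a) = 0)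
    (k : ℕ) :
    (inverseSystem K (perazzoForm K m d)).map (apolar K (PIdx m d) (linForm a b ^ k)) =
      ((degreeLT K (Fin m) (d - k)).prod (degreeLT K (Fin m) (d - k))).map
        (perazzoParam K m d ∘ₗ perazzoShear a b k) := by
  have hpow : apolar K (PIdx m d) (linForm a b ^ k) ∘ₗ perazzoParam K m d =
      (perazzoParam K m d ∘ₗ perazzoShear a b k) ∘ₗ
        LinearMap.prodMap LinearMap.id (apolar K (Fin m) (linearPoly b ^ k)) :=
    LinearMap.ext fun ⟨p, g⟩ ↦ apolar_linForm_pow_perazzoParam a b k p g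
  rw [inverseSystem_perazzoForm, ← Submodule.map_comp, hpow, Submodule.map_comp,
    LinearMap.prodMap_map_prod, Submodule.map_id, map_apolar_linearPoly_pow_degreeLT hb,
    map_perazzoShear_top_prod_degreeLT hab]

theorem disjoint_degreeLT_prod_ker_perazzoShear (a : MIdx m d → K) (hb : b ≠ 0) (k : ℕ) :
    Disjoint ((degreeLT K (Fin m) (d - k)).prod (degreeLT K (Fin m) (d - k)))
      (LinearMap.ker (perazzoParam K m d ∘ₗ perazzoShear a b k)) := by
  refine Submodule.disjoint_def.2 fun ⟨p, h⟩ ⟨hp, _⟩ hker ↦ ?_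
  rw [LinearMap.mem_ker, LinearMap.comp_apply, perazzoShear_apply, perazzoParam_eq_zero_iff] at hker
  obtain ⟨hmul, hh⟩ := hker
  have hp_zero : p = 0 := by
    rcases le_or_gt d k with hdk | hkd
    · simpa [Nat.sub_eq_zero_of_le hdk] using hp
    have hdegree : linearPoly b ^ k * p ∈ degreeLT K (Fin m) d := by
      simpa [Nat.add_sub_cancel' hkd.le] using
        mul_mem_degreeLT_of_isHomogeneous ((isHomogeneous_linearPoly b).pow k) hp
    have := Submodule.disjoint_def.1 (isCompl_degreeLT_pow_idealOfVars d).disjoint _ hdegree hmul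
    exact (mul_eq_zero.1 this).resolve_left (pow_ne_zero _ (linearPoly_ne_zero hb))
  simp_all

theorem rkPow_linForm (hb : b ≠ 0) (hab : eval b (coeffForm a) = 0) (k : ℕ) :
    rkPow (K := K) (Ideal.Quotient.mk (annIdeal (perazzoForm K m d)) (linForm a b)) k =
      2 * (m + (d - k) - 1).choose m := by
  let W := degreeLT K (Fin m) (d - k)
  let ι := W.subtype.prodMap W.subtype
  have hι : Function.Injective ι := W.subtype_injective.prodMap W.subtype_injective
  have hι_range : LinearMap.range ι = W.prod W := by simp [ι]
  have hN : Function.Injective ((perazzoParam K m d ∘ₗ perazzoShear a b k) ∘ₗ ι) := by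
    have hdisjoint := disjoint_degreeLT_prod_ker_perazzoShear a hb k
    rw [← hι_range] at hdisjoint
    exact (LinearMap.disjoint_ker_iff_injOn.1 hdisjoint).injective_iff _ Set.Subset.rfl |>.2 hι
  rw [rkPow_mk_annIdeal, map_apolar_linForm_pow_inverseSystem hb hab, ← hι_range,
    ← LinearMap.range_comp, LinearMap.finrank_range_of_inj hN, Module.finrank_prod,
    finrank_degreeLT, Fintype.card_fin, two_mul]

end Perazzo

theorem choose_add_two_add_choose (n r : ℕ) :
    (n + 2).choose (r + 2) + n.choose (r + 2) = n.choose r + 2 * (n + 1).choose (r + 2) := by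
  rw [Nat.choose_succ_succ (n + 1) (r + 1), Nat.choose_succ_succ n r,
    Nat.choose_succ_succ n (r + 1)]
  ring

theorem isJordanTypeMult_of_rkPow_eq_choose {K A : Type*} [Field K] [CommRing A] [Algebra K A]
    {ℓ : A} {c m d : ℕ} (hm : 2 ≤ m)
    (hrk : ∀ k, rkPow (K := K) ℓ k = c * (m + (d - k) - 1).choose m) :
    IsJordanTypeMult (K := K) ℓ
      fun k ↦ if k ≤ d then c * (m + d - 2 - k).choose (m - 2) else 0 := by
  intro k hk
  obtain ⟨r, rfl⟩ := Nat.exists_eq_add_of_le' hm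
  simp only [hrk, Nat.add_sub_cancel]
  split_ifs with hkd
  · obtain ⟨e, rfl⟩ := Nat.exists_eq_add_of_le hkd
    have hprev : r + 2 + (k + e - (k - 1)) - 1 = r + e + 2 := by lia
    have hcurr : r + 2 + (k + e - k) - 1 = r + e + 1 := by lia
    have hnext : (r + 2 + (k + e - (k + 1)) - 1).choose (r + 2) = (r + e).choose (r + 2) := by
      cases e with
      | zero => rw [Nat.choose_eq_zero_of_lt (by lia), Nat.choose_eq_zero_of_lt (by lia)]
      | succ e => congr 1; lia
    have hmult : r + 2 + (k + e) - 2 - k = r + e := by lia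
    rw [hprev, hcurr, hnext, hmult, ← mul_add, choose_add_two_add_choose]
    ring
  · rw [Nat.choose_eq_zero_of_lt (by lia), Nat.choose_eq_zero_of_lt (by lia),
      Nat.choose_eq_zero_of_lt (by lia)]
    simp

theorem sum_mul_prod_pow_eq_of_forall_ne {R : Type*} [CommRing R] {m d : ℕ} (a : MIdx m d → R)
    {b : Fin m → R} {k : Fin m} (hb : ∀ i, i ≠ k → b i = 0) :
    ∑ α, a α * ∏ j, b j ^ α.1 j = a (unitIdx m d k) * b k ^ (d - 1) := by
  rw [Finset.sum_eq_single (unitIdx m d k)]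
  · congr 1
    rw [Finset.prod_eq_single k (fun i _ hi ↦ by simp [unitIdx, hi]) (by simp)]
    simp [unitIdx]
  · intro α _ hα
    obtain ⟨i, hik, hi⟩ : ∃ i, i ≠ k ∧ α.1 i ≠ 0 := by
      by_contra! h
      have hk : α.1 k = d - 1 :=
        (Finset.sum_eq_single k (fun i _ hi ↦ h i hi) (by simp)).symm.trans α.2
      refine hα (Subtype.ext (funext fun i ↦ ?_))
      by_cases hi : i = k <;> simp_all [unitIdx]
    rw [Finset.prod_eq_zero (Finset.mem_univ i) (by rw [hb i hik, zero_pow hi]), mul_zero]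
  · simp

end

theorem jordanType_fullPerazzo_middle_general
    (K : Type*) [Field K] [CharZero K] (m d : ℕ) (hm : 2 ≤ m) (hd : 1 ≤ d)
    (a : MIdx m d → K) (b : Fin m → K) (hb : b ≠ 0)
    (hab : ∑ α, a α * ∏ j, b j ^ α.1 j = 0) :
    IsJordanTypeMult (K := K)
      (Ideal.Quotient.mk (annIdeal (perazzoForm K m d)) (linForm a b))
      (fun k => if k ≤ d then 2 * Nat.choose (m + d - 2 - k) (m - 2) else 0) :=
  haveI : NeZero m := ⟨by lia⟩
  haveI : NeZero d := ⟨by lia⟩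
  isJordanTypeMult_of_rkPow_eq_choose hm (rkPow_linForm hb ((eval_coeffForm a b).trans hab))

/-- Theorem 3.2(i): if (A) there is `k` with `b_k ≠ 0`, `b_i = 0` for `i ≠ k` and
`a_{(d-1)e_k} = 0`, or (B) `ℓ = ∑ b_j y_j ≠ 0`, then the Jordan type of `ℓ` in the full
Perazzo algebra `A_F` is `(d², (d-1)^{2·binom(m-1,m-2)}, …, 1^{2·binom(m+d-3,m-2)})`,
i.e. each part `1 ≤ k ≤ d` occurs with multiplicity `2·binom(m+d-2-k, m-2)` and no part
exceeds `d`. -/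
theorem jordanType_fullPerazzo_middle
    (K : Type*) [Field K] [CharZero K] (m d : ℕ) (hm : 2 ≤ m) (hd : 3 ≤ d)
    (a : MIdx m d → K) (b : Fin m → K)
    (hyp : (∃ k : Fin m, b k ≠ 0 ∧ (∀ i, i ≠ k → b i = 0) ∧ a (unitIdx m d k) = 0)
      ∨ ((∀ α, a α = 0) ∧ ∃ j, b j ≠ 0)) :
    IsJordanTypeMult (K := K)
      (Ideal.Quotient.mk (annIdeal (perazzoForm K m d)) (linForm a b))
      (fun k => if k ≤ d then 2 * Nat.choose (m + d - 2 - k) (m - 2) else 0) := by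
  rcases hyp with ⟨k, hbk, hb, ha⟩ | ⟨ha, j, hbj⟩
  · exact jordanType_fullPerazzo_middle_general K m d hm (by lia) a b
      (Function.ne_iff.2 ⟨k, hbk⟩) (by rw [sum_mul_prod_pow_eq_of_forall_ne a hb, ha, zero_mul])
  · exact jordanType_fullPerazzo_middle_general K m d hm (by lia) a b
      (Function.ne_iff.2 ⟨j, hbj⟩) (by simp [ha])
end

section
/- Let F = Σ_{|α|=d−1} X_α Y^α be the full Perazzo form and A_F = R/Ann_R(F) the full Perazzo algebra. Let ℓ = Σ_{|α|=d−1} a_α x_α ∈ [A_F]_1 be a nonzero linear form supported only on the x-variables. Then ℓ² ∈ Ann_R(F), so the multiplication map ×ℓ on A_F satisfies (×ℓ)² = 0, and the Jordan type of ℓ in A_F is P_{ℓ,A_F} = (2^a, 1^b), where a = dim_K A_{ℓ∘F} (with ℓ ∘ F = Σ a_α Y^α ∈ K[Y_1,…,Y_m]_{d−1} and A_{ℓ∘F} = K[y_1,…,y_m]/Ann(ℓ∘F)) and b = dim_K A_F − 2a. -/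
open MvPolynomial

/-- The polynomial `ℓ ∘ F = ∑_α a_α Y^α ∈ K[Y_1, …, Y_m]`, the result of applying the
linear form `ℓ = ∑_α a_α x_α` to the full Perazzo form `F`. -/
noncomputable def ellF {K : Type*} [CommSemiring K] {m d : ℕ}
    (a : MIdx m d → K) : MvPolynomial (Fin m) K :=
  ∑ α : MIdx m d, C (a α) * ∏ j, X j ^ (α.1 j)

/-!
The apolarity action makes `f ↦ f ∘ F` a linear map with kernel `Ann F`, so for every `ℓ` the map
`f ↦ ℓ f` into `A_F` has kernel `Ann (ℓ ∘ F)`: the image of `×ℓ` on `A_F` is a copy of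
`A_{ℓ ∘ F}`. If `F` is linear in the `x`-variables and `ℓ` involves only these, then `ℓ ∘ F`
involves only the `y`-variables, so its apolar algebra can be computed in `K[y]` and `ℓ² ∘ F = 0`.
The rank of `×ℓ` together with `(×ℓ)² = 0` determines the Jordan type.
-/

section PartialDerivatives

variable {R σ : Type*} [CommSemiring R]

theorem commute_toLinearMap_pderiv (i j : σ) :
    Commute ((pderiv i).toLinearMap : Module.End R (MvPolynomial σ R))
      (pderiv j).toLinearMap := by
  classical
  rcases eq_or_ne i j with rfl | hij
  · exact Commute.refl _
  · refine LinearMap.ext fun p => MvPolynomial.ext _ _ fun s => ?_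
    simp [coeff_pderiv, hij, hij.symm, add_right_comm, mul_right_comm]

theorem totalDegree_pderiv_le (i : σ) (p : MvPolynomial σ R) :
    (pderiv i p).totalDegree ≤ p.totalDegree := by
  classical
  refine Finset.sup_le fun s hs => ?_
  have hmem : s + Finsupp.single i 1 ∈ p.support := by
    rw [mem_support_iff, coeff_pderiv] at hs
    exact mem_support_iff.2 (left_ne_zero_of_mul hs)
  exact (Finsupp.sum_le_sum_index le_self_add (fun _ _ _ _ h => h) fun _ _ => rfl).trans
    (le_totalDegree hmem)

theorem pderiv_rename_of_notMem_range {τ : Type*} {f : σ → τ} {i : τ} (hi : i ∉ Set.range f)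
    (p : MvPolynomial σ R) : pderiv i (rename f p) = 0 := by
  classical
  refine pderiv_eq_zero_of_notMem_vars fun h => hi ?_
  obtain ⟨j, -, rfl⟩ := Finset.mem_image.1 (vars_rename f p h)
  exact ⟨j, rfl⟩

end PartialDerivatives

section Apolarity

variable {R σ : Type*} [CommSemiring R]

/-- The algebra of constant-coefficient differential operators on `R[x_i : i ∈ σ]`. It is the
commutative target that the evaluation map `aeval` in `apolarity` needs, `Module.End` not being
commutative. -/
noncomputable def partialsAlgebra (R σ : Type*) [CommSemiring R] :
    Subalgebra R (Module.End R (MvPolynomial σ R)) :=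
  Algebra.adjoin R (Set.range fun i => (pderiv i).toLinearMap)

instance isMulCommutative_partialsAlgebra : IsMulCommutative (partialsAlgebra R σ) :=
  Algebra.isMulCommutative_adjoin R <| by
    rintro _ ⟨i, rfl⟩ _ ⟨j, rfl⟩
    exact commute_toLinearMap_pderiv i j

open scoped IsMulCommutative in
/-- The apolarity action of `R[x_i : i ∈ σ]` on itself, as the algebra homomorphism sending `x_i`
to `∂/∂x_i`; `diffAction f F` is `apolarity f F`. -/
noncomputable def apolarity : MvPolynomial σ R →ₐ[R] Module.End R (MvPolynomial σ R) :=
  (partialsAlgebra R σ).val.comp <| aeval fun i =>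
    (⟨(pderiv i).toLinearMap, Algebra.subset_adjoin ⟨i, rfl⟩⟩ : partialsAlgebra R σ)

theorem apolarity_X (i : σ) :
    apolarity (X i) = ((pderiv i).toLinearMap : Module.End R (MvPolynomial σ R)) := by
  simp [apolarity]

theorem apolarity_C_apply (c : R) (F : MvPolynomial σ R) : apolarity (C c) F = c • F := by
  rw [← algebraMap_eq, AlgHom.commutes, Module.algebraMap_end_apply]

theorem apolarity_mul_apply (f g F : MvPolynomial σ R) :
    apolarity (f * g) F = apolarity f (apolarity g F) := by
  rw [map_mul, Module.End.mul_apply]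

theorem apolarity_monomial_one [DecidableEq σ] (s : σ →₀ ℕ) :
    apolarity (monomial s (1 : R)) = diffOp s := by
  rw [monomial_eq, C_1, one_mul, Finsupp.prod, ← Finset.prod_map_toList, map_list_prod,
    List.map_map, diffOp]
  simp only [Function.comp_def, map_pow, apolarity_X]

theorem apolarity_apply_eq_diffAction [DecidableEq σ] (f F : MvPolynomial σ R) :
    apolarity f F = diffAction f F := by
  have hf : f = ∑ s ∈ f.support, f.coeff s • monomial s 1 := by
    simpa only [smul_monomial, smul_eq_mul, mul_one] using f.as_sum
  conv_lhs => rw [hf]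
  simp only [map_sum, map_smul, LinearMap.sum_apply, LinearMap.smul_apply,
    apolarity_monomial_one, diffAction]

theorem mem_annIdeal_iff [DecidableEq σ] {f F : MvPolynomial σ R} :
    f ∈ annIdeal F ↔ apolarity f F = 0 := by
  refine ⟨fun h => ?_, fun h => Ideal.subset_span ?_⟩
  · induction h using Submodule.span_induction with
    | mem f hf => rwa [apolarity_apply_eq_diffAction]
    | zero => simp
    | add f g _ _ hf hg => simp [hf, hg]
    | smul r f _ hf => rw [smul_eq_mul, apolarity_mul_apply, hf, map_zero]
  · rwa [Set.mem_ofPred_eq, ← apolarity_apply_eq_diffAction]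

theorem totalDegree_apolarity_le (f F : MvPolynomial σ R) :
    (apolarity f F).totalDegree ≤ F.totalDegree := by
  induction f using MvPolynomial.induction_on generalizing F with
  | C c => rw [apolarity_C_apply]; exact totalDegree_smul_le c F
  | add f g hf hg =>
    rw [map_add]
    exact (totalDegree_add _ _).trans (max_le (hf F) (hg F))
  | mul_X f i hf =>
    rw [apolarity_mul_apply, apolarity_X]
    exact (hf _).trans (totalDegree_pderiv_le i F)

theorem apolarity_rename {τ : Type*} {e : σ → τ} (he : Function.Injective e)
    (f : MvPolynomial τ R) (G : MvPolynomial σ R) :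
    apolarity f (rename e G) = rename e (apolarity (killCompl he f) G) := by
  induction f using MvPolynomial.induction_on generalizing G with
  | C c => simp only [killCompl_C, apolarity_C_apply, map_smul]
  | add f g hf hg => simp only [map_add, LinearMap.add_apply, hf, hg]
  | mul_X f i hf =>
    rw [apolarity_mul_apply, map_mul, apolarity_mul_apply, apolarity_X]
    by_cases hi : i ∈ Set.range e
    · obtain ⟨j, rfl⟩ := hi
      rw [← rename_X, killCompl_rename_app, apolarity_X]
      exact (congrArg (apolarity f) (pderiv_rename he j G)).trans (hf _)
    · have hX : killCompl he (X i : MvPolynomial τ R) = 0 := by simp [killCompl, hi]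
      have hG : (pderiv i).toLinearMap (rename e G) = 0 := pderiv_rename_of_notMem_range hi G
      simp only [hX, hG, map_zero, LinearMap.zero_apply]

end Apolarity

section ApolarAlgebra

variable {R σ : Type*} [CommRing R] [DecidableEq σ]

/-- The first isomorphism theorem for an `R`-linear map on an `R`-algebra whose kernel is an
ideal. -/
noncomputable def quotientEquivRangeOfKerEq {A M : Type*} [CommRing A] [Algebra R A]
    [AddCommGroup M] [Module R M] {I : Ideal A} (φ : A →ₗ[R] M)
    (h : I.restrictScalars R = LinearMap.ker φ) : (A ⧸ I) ≃ₗ[R] LinearMap.range φ :=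
  (Submodule.Quotient.restrictScalarsEquiv R I).symm ≪≫ₗ
    Submodule.quotEquivOfEq _ _ h ≪≫ₗ φ.quotKerEquivRange

instance finite_quotient_annIdeal [IsNoetherianRing R] [Finite σ] (F : MvPolynomial σ R) :
    Module.Finite R (MvPolynomial σ R ⧸ annIdeal F) := by
  let φ : MvPolynomial σ R →ₗ[R] MvPolynomial σ R := (apolarity (R := R)).toLinearMap.flip F
  have hker : (annIdeal F).restrictScalars R = LinearMap.ker φ :=
    Submodule.ext fun _ => mem_annIdeal_iff
  have hrange : LinearMap.range φ ≤ restrictTotalDegree σ R F.totalDegree := by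
    rintro _ ⟨f, rfl⟩
    exact (mem_restrictTotalDegree _ _ _).2 (totalDegree_apolarity_le f F)
  have : Module.Finite R (LinearMap.range φ) :=
    Module.Finite.of_injective _ (Submodule.inclusion_injective hrange)
  exact Module.Finite.equiv (quotientEquivRangeOfKerEq φ hker).symm

theorem finrank_range_mulLeft_mk_annIdeal (ℓ F : MvPolynomial σ R) :
    Module.finrank R
        (LinearMap.range (LinearMap.mulLeft R (Ideal.Quotient.mk (annIdeal F) ℓ))) =
      Module.finrank R (MvPolynomial σ R ⧸ annIdeal (apolarity ℓ F)) := by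
  let π : MvPolynomial σ R →ₗ[R] MvPolynomial σ R ⧸ annIdeal F :=
    (Ideal.Quotient.mkₐ R (annIdeal F)).toLinearMap
  let mulℓ := LinearMap.mulLeft R (Ideal.Quotient.mk (annIdeal F) ℓ)
  have hker : (annIdeal (apolarity ℓ F)).restrictScalars R = LinearMap.ker (mulℓ ∘ₗ π) := by
    ext f
    change f ∈ annIdeal (apolarity ℓ F) ↔ Ideal.Quotient.mk (annIdeal F) (ℓ * f) = 0
    rw [Ideal.Quotient.eq_zero_iff_mem, mem_annIdeal_iff, mem_annIdeal_iff, mul_comm,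
      apolarity_mul_apply]
  have hrange : LinearMap.range (mulℓ ∘ₗ π) = LinearMap.range mulℓ :=
    LinearMap.range_comp_of_range_eq_top _
      (LinearMap.range_eq_top.2 (Ideal.Quotient.mkₐ_surjective R _))
  rw [← hrange]
  exact (quotientEquivRangeOfKerEq _ hker).finrank_eq.symm

theorem finrank_quotient_annIdeal_rename {τ : Type*} [DecidableEq τ] {e : σ → τ}
    (he : Function.Injective e) (G : MvPolynomial σ R) :
    Module.finrank R (MvPolynomial τ R ⧸ annIdeal (rename e G)) =
      Module.finrank R (MvPolynomial σ R ⧸ annIdeal G) := by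
  let ψ : MvPolynomial τ R →ₐ[R] MvPolynomial σ R ⧸ annIdeal G :=
    (Ideal.Quotient.mkₐ R (annIdeal G)).comp (killCompl he)
  have hψ : Function.Surjective ψ := (Ideal.Quotient.mkₐ_surjective R _).comp
    (Function.LeftInverse.surjective (killCompl_rename_app he))
  have hker : annIdeal (rename e G) = RingHom.ker ψ := by
    ext f
    change _ ↔ Ideal.Quotient.mk (annIdeal G) (killCompl he f) = 0
    rw [Ideal.Quotient.eq_zero_iff_mem, mem_annIdeal_iff, mem_annIdeal_iff, apolarity_rename he,
      map_eq_zero_iff _ (rename_injective e he)]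
  rw [hker]
  exact (Ideal.quotientKerAlgEquivOfSurjective hψ).toLinearEquiv.finrank_eq

end ApolarAlgebra

section SquareZero

variable {K : Type*} [Field K]

theorem two_mul_finrank_range_le_of_sq_eq_zero {V : Type*} [AddCommGroup V] [Module K V]
    [FiniteDimensional K V] {φ : Module.End K V} (hφ : φ ^ 2 = 0) :
    2 * Module.finrank K (LinearMap.range φ) ≤ Module.finrank K V := by
  have hle : LinearMap.range φ ≤ LinearMap.ker φ :=
    LinearMap.range_le_ker_iff.2 ((pow_two φ).symm.trans hφ)
  have hrank := φ.finrank_range_add_finrank_ker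
  have hmono := Submodule.finrank_mono hle
  lia

theorem isJordanTypeMult_of_sq_eq_zero {A : Type*} [CommRing A] [Algebra K A]
    [FiniteDimensional K A] {ℓ : A} (hℓ : LinearMap.mulLeft K ℓ ^ 2 = 0) :
    IsJordanTypeMult (K := K) ℓ fun k =>
      if k = 2 then Module.finrank K (LinearMap.range (LinearMap.mulLeft K ℓ))
      else if k = 1 then
        Module.finrank K A - 2 * Module.finrank K (LinearMap.range (LinearMap.mulLeft K ℓ))
      else 0 := by
  have rank_zero : rkPow (K := K) ℓ 0 = Module.finrank K A := by
    rw [rkPow, pow_zero, Module.End.one_eq_id, LinearMap.range_id, finrank_top]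
  have rank_one : rkPow (K := K) ℓ 1 =
      Module.finrank K (LinearMap.range (LinearMap.mulLeft K ℓ)) := by
    rw [rkPow, pow_one]
  have rank_of_two_le (k : ℕ) (hk : 2 ≤ k) : rkPow (K := K) ℓ k = 0 := by
    rw [rkPow, pow_eq_zero_of_le hk hℓ, LinearMap.range_zero, finrank_bot]
  have hle := two_mul_finrank_range_le_of_sq_eq_zero hℓ
  intro k hk
  obtain rfl | rfl | hk3 : k = 1 ∨ k = 2 ∨ 3 ≤ k := by lia
  · simp only [Nat.sub_self, Nat.reduceAdd, rank_zero, rank_one, rank_of_two_le 2 le_rfl,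
      OfNat.one_ne_ofNat, if_false, if_true]
    lia
  · simp [rank_one, rank_of_two_le]
  · simp only [rank_of_two_le _ (show 2 ≤ k by lia), rank_of_two_le _ (show 2 ≤ k - 1 by lia),
      rank_of_two_le _ (show 2 ≤ k + 1 by lia), show k ≠ 1 by lia, show k ≠ 2 by lia, if_false,
      mul_zero, add_zero]

end SquareZero

section PerazzoForms

variable {R ι σ : Type*} [CommSemiring R] [Fintype ι]

/-- The Perazzo form `∑ i, X_i p_i(Y) + q(Y)` of an arbitrary family of polynomials `p_i` and a
polynomial `q`. The full Perazzo form is the case where `p` lists all monomials of degree `d - 1`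
and `q = 0`. -/
noncomputable def perazzoFormOf (p : ι → MvPolynomial σ R) (q : MvPolynomial σ R) :
    MvPolynomial (ι ⊕ σ) R :=
  ∑ i, X (Sum.inl i) * rename Sum.inr (p i) + rename Sum.inr q

/-- The linear form `∑ i, a_i x_i` supported on the `x`-variables of `R[x_i, y_j]`. -/
noncomputable def xLinForm (σ : Type*) (a : ι → R) : MvPolynomial (ι ⊕ σ) R :=
  ∑ i, C (a i) * X (Sum.inl i)

theorem pderiv_inl_perazzoFormOf (p : ι → MvPolynomial σ R) (q : MvPolynomial σ R) (i : ι) :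
    pderiv (Sum.inl i) (perazzoFormOf p q) = rename Sum.inr (p i) := by
  classical
  have hy (r : MvPolynomial σ R) : pderiv (Sum.inl i : ι ⊕ σ) (rename Sum.inr r) = 0 :=
    pderiv_rename_of_notMem_range (by simp) r
  simp [perazzoFormOf, hy, pderiv_X, Pi.single_apply, eq_comm]

theorem apolarity_xLinForm_perazzoFormOf (p : ι → MvPolynomial σ R) (q : MvPolynomial σ R)
    (a : ι → R) :
    apolarity (xLinForm σ a) (perazzoFormOf p q) = rename Sum.inr (∑ i, a i • p i) := by
  have hX (i : ι) : apolarity (X (Sum.inl i)) (perazzoFormOf p q) = rename Sum.inr (p i) := by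
    rw [apolarity_X]
    exact pderiv_inl_perazzoFormOf p q i
  simp only [xLinForm, map_sum, LinearMap.sum_apply, apolarity_mul_apply, apolarity_C_apply, hX,
    map_smul]

theorem xLinForm_sq_mem_annIdeal [DecidableEq ι] [DecidableEq σ] (p : ι → MvPolynomial σ R)
    (q : MvPolynomial σ R) (a : ι → R) :
    xLinForm σ a ^ 2 ∈ annIdeal (perazzoFormOf p q) := by
  have hkill : killCompl Sum.inr_injective (xLinForm σ a) = 0 := by
    simp [xLinForm, killCompl]
  rw [mem_annIdeal_iff, pow_two, apolarity_mul_apply, apolarity_xLinForm_perazzoFormOf,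
    apolarity_rename Sum.inr_injective, hkill, map_zero, LinearMap.zero_apply, map_zero]

theorem perazzoForm_eq_perazzoFormOf (m d : ℕ) :
    perazzoForm R m d = perazzoFormOf (fun α : MIdx m d => ∏ j, X j ^ α.1 j) 0 := by
  simp [perazzoForm, perazzoFormOf]

theorem linForm_zero_eq_xLinForm {m d : ℕ} (a : MIdx m d → R) :
    linForm a (fun _ => 0) = xLinForm (Fin m) a := by
  simp [linForm, xLinForm]

theorem ellF_eq_sum_smul {m d : ℕ} (a : MIdx m d → R) :
    ellF a = ∑ α, a α • ∏ j, X j ^ α.1 j := by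
  simp only [ellF, smul_eq_C_mul]

end PerazzoForms

theorem jordanType_fullPerazzo_min_general {K ι σ : Type*} [Field K] [Fintype ι] [DecidableEq ι]
    [Finite σ] [DecidableEq σ] (p : ι → MvPolynomial σ K) (q : MvPolynomial σ K) (a : ι → K) :
    xLinForm σ a ^ 2 ∈ annIdeal (perazzoFormOf p q) ∧
    LinearMap.mulLeft K (Ideal.Quotient.mk (annIdeal (perazzoFormOf p q)) (xLinForm σ a)) ^ 2 = 0 ∧
    IsJordanTypeMult (K := K) (Ideal.Quotient.mk (annIdeal (perazzoFormOf p q)) (xLinForm σ a))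
      (fun k =>
        if k = 2 then Module.finrank K (MvPolynomial σ K ⧸ annIdeal (∑ i, a i • p i))
        else if k = 1 then
          Module.finrank K (MvPolynomial (ι ⊕ σ) K ⧸ annIdeal (perazzoFormOf p q))
            - 2 * Module.finrank K (MvPolynomial σ K ⧸ annIdeal (∑ i, a i • p i))
        else 0) := by
  have hmem := xLinForm_sq_mem_annIdeal p q a
  have hsq : LinearMap.mulLeft K
      (Ideal.Quotient.mk (annIdeal (perazzoFormOf p q)) (xLinForm σ a)) ^ 2 = 0 := by
    rw [LinearMap.pow_mulLeft, ← map_pow, Ideal.Quotient.eq_zero_iff_mem.2 hmem,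
      LinearMap.mulLeft_zero_eq_zero]
  have hrank := finrank_range_mulLeft_mk_annIdeal (xLinForm σ a) (perazzoFormOf p q)
  rw [apolarity_xLinForm_perazzoFormOf, finrank_quotient_annIdeal_rename Sum.inr_injective]
    at hrank
  exact ⟨hmem, hsq, hrank ▸ isJordanTypeMult_of_sq_eq_zero hsq⟩

/-- Theorem 3.2(iii): if `ℓ = ∑ a_α x_α` is a nonzero linear form supported only on the
`x`-variables, then `ℓ² ∈ Ann(F)`, the multiplication map `×ℓ` on `A_F` squares to zero,
and the Jordan type of `ℓ` in `A_F` is `(2^a, 1^b)` with `a = dim_K A_{ℓ∘F}` and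
`b = dim_K A_F - 2a`. -/
theorem jordanType_fullPerazzo_min
    (K : Type*) [Field K] [CharZero K] (m d : ℕ) (hm : 2 ≤ m) (hd : 3 ≤ d)
    (a : MIdx m d → K) (ha : a ≠ 0) :
    (linForm a (fun _ => 0)) ^ 2 ∈ annIdeal (perazzoForm K m d) ∧
    (LinearMap.mulLeft K
        (Ideal.Quotient.mk (annIdeal (perazzoForm K m d)) (linForm a (fun _ => 0)))) ^ 2 = 0 ∧
    IsJordanTypeMult (K := K)
      (Ideal.Quotient.mk (annIdeal (perazzoForm K m d)) (linForm a (fun _ => 0)))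
      (fun k =>
        if k = 2 then Module.finrank K (MvPolynomial (Fin m) K ⧸ annIdeal (ellF a))
        else if k = 1 then
          Module.finrank K
              (MvPolynomial (PIdx m d) K ⧸ annIdeal (perazzoForm K m d))
            - 2 * Module.finrank K (MvPolynomial (Fin m) K ⧸ annIdeal (ellF a))
        else 0) := by
  rw [perazzoForm_eq_perazzoFormOf, linForm_zero_eq_xLinForm, ellF_eq_sum_smul]
  exact jordanType_fullPerazzo_min_general _ 0 a
end

section
/- Fix integers d ≥ 3 and m ≥ 2, and set D = 2·binom(d+m−1, m). Define a_max = binom((d−1)/2 + m−1, m−1) + 2·Σ_{i=0}^{(d−3)/2} binom(i+m−1, m−1) if d is odd, and a_max = 2·Σ_{i=0}^{(d−2)/2} binom(i+m−1, m−1) if d is even. Consider the following partitions of D: Q_a = (2^a, 1^{D−2a}) for each integer d ≤ a ≤ a_max; P_mid, which has exactly 2·binom(m+d−2−k, m−2) parts equal to k for each 1 ≤ k ≤ d; and P_max, which has one part d+1, no part d, exactly 2m−1 parts equal to d−1, and exactly 2·binom(m+d−2−k, m−2) parts equal to k for each 1 ≤ k ≤ d−2. Then in the dominance order these form a chain: Q_d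 ≤ Q_{d+1} ≤ ⋯ ≤ Q_{a_max} ≤ P_mid ≤ P_max. -/
/-!
A partition `P` of `D ≥ 2a` dominates `(2^a, 1^{D - 2a})` as soon as it has at most `D - a` parts:
for every `k`, either the `k` largest parts of `P` are all at least `2`, or all the remaining parts
are at most `1`. For `P_mid` this becomes an upper bound on `a_max`. To see it, write `a_max` as the
sum over `0 ≤ i < d` of `min (h i) (h (d - 1 - i))`, where `h i = binom(i + m - 1, m - 1)`: every
term is at most `h i` and the last one is `h 0 = 1`, so `a_max ≤ binom(d + m - 2, m) + 1`.
Finally, `P_max` arises from `P_mid` by moving one box of the Young diagram from the second row to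
the first.
-/

open MvPolynomial

/-- The maximal possible value of `dim_K A_{ℓ∘F}`: the dimension of the degree-`≤ d-1`
part of a compressed Gorenstein algebra of codimension `m` and socle degree `d - 1`. -/
noncomputable def aMax (m d : ℕ) : ℕ :=
  if d % 2 = 1 then
    Nat.choose ((d - 1) / 2 + m - 1) (m - 1)
      + 2 * ∑ i ∈ Finset.range ((d - 3) / 2 + 1), Nat.choose (i + m - 1) (m - 1)
  else
    2 * ∑ i ∈ Finset.range ((d - 2) / 2 + 1), Nat.choose (i + m - 1) (m - 1)

/-- The sum of the `k` largest parts of the partition given by the multiset `P`. -/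
noncomputable def topSum (P : Multiset ℕ) (k : ℕ) : ℕ :=
  ((P.sort (· ≥ ·)).take k).sum

/-- Dominance order on partitions (of the same number), given as multisets of parts:
`P` dominates `Q` if for every `k` the sum of the `k` largest parts of `Q` is at most
the sum of the `k` largest parts of `P`. -/
def Dominates (P Q : Multiset ℕ) : Prop := ∀ k : ℕ, topSum Q k ≤ topSum P k

/-- The partition `(2^a, 1^{D - 2a})` of `D`. -/
def Qpart (D a : ℕ) : Multiset ℕ :=
  Multiset.replicate a 2 + Multiset.replicate (D - 2 * a) 1

/-- The partition `(d^2, (d-1)^{2·binom(m-1,m-2)}, …, 1^{2·binom(m+d-3,m-2)})`: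
exactly `2·binom(m+d-2-k, m-2)` parts equal to `k`, for each `1 ≤ k ≤ d`. -/
def Pmid (m d : ℕ) : Multiset ℕ :=
  ∑ k ∈ Finset.Icc 1 d, Multiset.replicate (2 * Nat.choose (m + d - 2 - k) (m - 2)) k

/-- The partition `(d+1, (d-1)^{2m-1}, (d-2)^{2·binom(m,m-2)}, …, 1^{2·binom(m+d-3,m-2)})`:
one part `d+1`, no part `d`, exactly `2m - 1` parts equal to `d - 1`, and exactly
`2·binom(m+d-2-k, m-2)` parts equal to `k` for `1 ≤ k ≤ d - 2`. -/
def Pmax (m d : ℕ) : Multiset ℕ :=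
  {d + 1} + Multiset.replicate (2 * m - 1) (d - 1)
    + ∑ k ∈ Finset.Icc 1 (d - 2), Multiset.replicate (2 * Nat.choose (m + d - 2 - k) (m - 2)) k

lemma topSum_zero (P : Multiset ℕ) : topSum P 0 = 0 := by
  simp [topSum]

lemma topSum_of_card_le {P : Multiset ℕ} {k : ℕ} (h : P.card ≤ k) : topSum P k = P.sum := by
  rw [topSum, List.take_of_length_le (by simpa using h), ← Multiset.sum_coe, Multiset.sort_eq]

lemma topSum_cons {x : ℕ} {P : Multiset ℕ} (h : ∀ y ∈ P, y ≤ x) (k : ℕ) :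
    topSum (x ::ₘ P) (k + 1) = x + topSum P k := by
  rw [topSum, Multiset.sort_cons (r := (· ≥ ·)) x P h, List.take_succ_cons, List.sum_cons, topSum]

lemma topSum_replicate_add {x : ℕ} {P : Multiset ℕ} (h : ∀ y ∈ P, y ≤ x) (n k : ℕ) :
    topSum (Multiset.replicate n x + P) k = min k n * x + topSum P (k - n) := by
  induction n generalizing k with
  | zero => simp
  | succ n ih =>
    have hmax : ∀ y ∈ Multiset.replicate n x + P, y ≤ x := by
      intro y hy
      rcases Multiset.mem_add.1 hy with hy | hy
      · exact (Multiset.eq_of_mem_replicate hy).le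
      · exact h y hy
    rw [Multiset.replicate_succ, Multiset.cons_add]
    cases k with
    | zero => simp [topSum_zero]
    | succ k =>
      rw [topSum_cons hmax, ih, Nat.add_sub_add_right, Nat.succ_min_succ, Nat.succ_mul]
      ring

lemma topSum_replicate (n x k : ℕ) : topSum (Multiset.replicate n x) k = min k n * x := by
  simpa [topSum] using topSum_replicate_add (P := 0) (x := x) (by simp) n k

lemma mul_le_topSum_or_sum_le (P : Multiset ℕ) (c : ℕ) {k : ℕ} (hk : k ≤ P.card) :
    (c + 1) * k ≤ topSum P k ∨ P.sum ≤ topSum P k + c * (P.card - k) := by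
  set l := P.sort (· ≥ ·) with hl
  have hlen : l.length = P.card := by simp [hl]
  have hsum : P.sum = topSum P k + (l.drop k).sum := by
    rw [topSum, ← hl, List.sum_take_add_sum_drop, ← Multiset.sum_coe, hl, Multiset.sort_eq]
  have hsorted : (l.take k ++ l.drop k).Pairwise (· ≥ ·) := by
    rw [List.take_append_drop]
    exact P.pairwise_sort _
  by_cases htop : ∀ x ∈ l.take k, c + 1 ≤ x
  · left
    have := List.card_nsmul_le_sum _ _ htop
    rwa [List.length_take, hlen, min_eq_left hk, smul_eq_mul, mul_comm] at this
  · right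
    push Not at htop
    obtain ⟨x, hx, hxc⟩ := htop
    have hrest : ∀ y ∈ l.drop k, y ≤ c := fun y hy =>
      ((List.pairwise_append.1 hsorted).2.2 x hx y hy).trans (Nat.le_of_lt_succ hxc)
    have := List.sum_le_card_nsmul _ _ hrest
    rw [List.length_drop, hlen, smul_eq_mul, mul_comm] at this
    omega

lemma dominates_succ_cons_cons {x y : ℕ} {R : Multiset ℕ} (hyx : y < x) (hR : ∀ z ∈ R, z ≤ y) :
    Dominates ((x + 1) ::ₘ y ::ₘ R) (x ::ₘ (y + 1) ::ₘ R) := by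
  have hR' : ∀ z ∈ R, z ≤ y + 1 := fun z hz => (hR z hz).trans y.le_succ
  have hyR : ∀ z ∈ y ::ₘ R, z ≤ x + 1 := by
    simp only [Multiset.forall_mem_cons]
    exact ⟨by omega, fun z hz => (hR z hz).trans (by omega)⟩
  have hyR' : ∀ z ∈ (y + 1) ::ₘ R, z ≤ x := by
    simp only [Multiset.forall_mem_cons]
    exact ⟨hyx, fun z hz => (hR z hz).trans hyx.le⟩
  intro k
  rcases k with _ | _ | k
  · simp only [topSum_zero, le_refl]
  · simp only [topSum_cons hyR, topSum_cons hyR', topSum_zero]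
    omega
  · simp only [topSum_cons hyR, topSum_cons hyR', topSum_cons hR, topSum_cons hR']
    omega

lemma topSum_Qpart (D a k : ℕ) :
    topSum (Qpart D a) k = min k a * 2 + min (k - a) (D - 2 * a) := by
  have hle : ∀ y ∈ Multiset.replicate (D - 2 * a) 1, y ≤ 2 := fun y hy =>
    (Multiset.eq_of_mem_replicate hy).trans_le one_le_two
  rw [Qpart, topSum_replicate_add hle, topSum_replicate, mul_one]

lemma dominates_Qpart_of_le (D : ℕ) {a b : ℕ} (hab : a ≤ b) :
    Dominates (Qpart D b) (Qpart D a) := by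
  intro k
  rw [topSum_Qpart, topSum_Qpart]
  omega

lemma dominates_Qpart_of_card_add_le {P : Multiset ℕ} {D a : ℕ} (hsum : P.sum = D) (ha : 2 * a ≤ D)
    (hcard : P.card + a ≤ D) : Dominates P (Qpart D a) := by
  intro k
  rw [topSum_Qpart]
  rcases le_total P.card k with hk | hk
  · rw [topSum_of_card_le hk]
    omega
  · have := mul_le_topSum_or_sum_le P 1 hk
    omega

lemma sum_range_choose_add (n d : ℕ) :
    ∑ j ∈ Finset.range d, (j + n).choose n = (d + n).choose (n + 1) := by
  cases d with
  | zero => simp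
  | succ d => rw [Nat.sum_range_add_choose, Nat.add_right_comm]

lemma sum_range_sub_nsmul {M : Type*} [AddCommMonoid M] (f : ℕ → M) (d : ℕ) :
    ∑ j ∈ Finset.range d, (d - j) • f j =
      ∑ e ∈ Finset.range d, ∑ j ∈ Finset.range (e + 1), f j := by
  induction d with
  | zero => simp
  | succ d ih =>
    have hsplit : ∀ j ∈ Finset.range (d + 1), (d + 1 - j) • f j = (d - j) • f j + f j := by
      intro j hj
      rw [Nat.succ_sub (Finset.mem_range_succ_iff.1 hj), succ_nsmul]
    rw [Finset.sum_congr rfl hsplit, Finset.sum_add_distrib,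
      Finset.sum_range_succ (fun j => (d - j) • f j), Nat.sub_self, zero_nsmul, add_zero, ih,
      ← Finset.sum_range_succ (fun e => ∑ j ∈ Finset.range (e + 1), f j)]

lemma sum_range_sub_mul_choose_add (n d : ℕ) :
    ∑ j ∈ Finset.range d, (d - j) * (j + n).choose n = (d + n + 1).choose (n + 2) := by
  calc ∑ j ∈ Finset.range d, (d - j) * (j + n).choose n
      = ∑ e ∈ Finset.range d, (e + (n + 1)).choose (n + 1) := by
        simp only [← smul_eq_mul, sum_range_sub_nsmul, sum_range_choose_add, add_assoc,
          add_comm 1 n]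
    _ = (d + n + 1).choose (n + 2) := sum_range_choose_add (n + 1) d

lemma Pmid_eq_sum_range (m d : ℕ) :
    Pmid (m + 2) d =
      ∑ j ∈ Finset.range d, Multiset.replicate (2 * (j + m).choose m) (d - j) := by
  refine Finset.sum_nbij' (d - ·) (d - ·) ?_ ?_ ?_ ?_ fun k hk => ?_
  any_goals
    simp only [Finset.mem_Icc, Finset.mem_range]
    omega
  rw [Finset.mem_Icc] at hk
  rw [show m + 2 + d - 2 - k = d - k + m by omega, Nat.add_sub_cancel, Nat.sub_sub_self hk.2]

lemma card_Pmid (m d : ℕ) : (Pmid (m + 2) d).card = 2 * (d + m).choose (m + 1) := by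
  simp only [Pmid_eq_sum_range, Multiset.card_sum, Multiset.card_replicate, ← Finset.mul_sum,
    sum_range_choose_add]

lemma sum_Pmid (m d : ℕ) : (Pmid (m + 2) d).sum = 2 * (d + m + 1).choose (m + 2) := by
  simp only [Pmid_eq_sum_range, Multiset.sum_sum, Multiset.sum_replicate, smul_eq_mul, mul_assoc,
    mul_comm (Nat.choose _ _), ← Finset.mul_sum, sum_range_sub_mul_choose_add]

/-- The parts that `Pmid (m + 2) (d + 2)` and `Pmax (m + 2) (d + 2)` have in common: all but the two
largest parts of each of them. -/
def commonParts (m d : ℕ) : Multiset ℕ :=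
  Multiset.replicate (2 * (m + 1)) (d + 1) +
    ∑ k ∈ Finset.Icc 1 d, Multiset.replicate (2 * (m + d + 2 - k).choose m) k

lemma le_of_mem_commonParts {m d z : ℕ} (hz : z ∈ commonParts m d) : z ≤ d + 1 := by
  rcases Multiset.mem_add.1 hz with hz | hz
  · exact (Multiset.eq_of_mem_replicate hz).le
  · obtain ⟨k, hk, hz⟩ := Multiset.mem_sum.1 hz
    rw [Multiset.eq_of_mem_replicate hz]
    exact (Finset.mem_Icc.1 hk).2.trans d.le_succ

lemma Pmid_eq_cons_cons (m d : ℕ) :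
    Pmid (m + 2) (d + 2) = (d + 2) ::ₘ (d + 2) ::ₘ commonParts m d := by
  have hsub (k : ℕ) : m + 2 + (d + 2) - 2 - k = m + d + 2 - k := by omega
  have hd₁ : m + d + 2 - (d + 1) = m + 1 := by omega
  have hd₂ : m + d + 2 - (d + 2) = m := by omega
  simp only [Pmid, commonParts, hsub, Nat.add_sub_cancel]
  rw [Finset.sum_Icc_succ_top (by omega), Finset.sum_Icc_succ_top (by omega), add_assoc d 1 1, hd₁,
    hd₂, Nat.choose_self, Nat.choose_succ_self_right]
  simp only [← Multiset.singleton_add, mul_one, Multiset.replicate_succ, Multiset.replicate_zero]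
  abel

lemma Pmax_eq_cons_cons (m d : ℕ) :
    Pmax (m + 2) (d + 2) = (d + 3) ::ₘ (d + 1) ::ₘ commonParts m d := by
  have hsub (k : ℕ) : m + 2 + (d + 2) - 2 - k = m + d + 2 - k := by omega
  have hmul : 2 * (m + 2) - 1 = 2 * (m + 1) + 1 := by omega
  simp only [Pmax, commonParts, hsub, hmul, Nat.add_sub_cancel, Multiset.replicate_succ]
  simp only [← Multiset.singleton_add, add_assoc]
  rfl

lemma dominates_Pmax_Pmid (m d : ℕ) : Dominates (Pmax (m + 2) (d + 2)) (Pmid (m + 2) (d + 2)) := by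
  rw [Pmax_eq_cons_cons, Pmid_eq_cons_cons]
  exact dominates_succ_cons_cons (Nat.lt_succ_self _) fun _ => le_of_mem_commonParts

lemma sum_range_min_reflect {M : Type*} [AddCommMonoid M] {a b : ℕ} (hba : b ≤ a)
    (hab : a ≤ b + 1) (f : ℕ → M) :
    ∑ i ∈ Finset.range (a + b), f (min i (a + b - 1 - i)) =
      ∑ i ∈ Finset.range a, f i + ∑ i ∈ Finset.range b, f i := by
  rw [Finset.sum_range_add, ← Finset.sum_range_reflect f b]
  congr 1
  all_goals
    refine Finset.sum_congr rfl fun i hi => congrArg f ?_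
    rw [Finset.mem_range] at hi
    omega

lemma aMax_eq_sum (m : ℕ) {d : ℕ} (hd : 2 ≤ d) :
    aMax (m + 1) d = ∑ i ∈ Finset.range d, (min i (d - 1 - i) + m).choose m := by
  simp only [aMax, ← add_assoc, Nat.add_sub_cancel]
  split_ifs with hodd
  · obtain ⟨t, rfl⟩ : ∃ t, d = t + 1 + t := ⟨d / 2, by omega⟩
    rw [sum_range_min_reflect t.le_succ le_rfl (fun i => (i + m).choose m),
      Finset.sum_range_succ _ t, show (t + 1 + t - 1) / 2 = t by omega,
      show (t + 1 + t - 3) / 2 + 1 = t by omega]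
    ring
  · obtain ⟨t, rfl⟩ : ∃ t, d = t + t := ⟨d / 2, by omega⟩
    rw [sum_range_min_reflect le_rfl t.le_succ (fun i => (i + m).choose m),
      show (t + t - 2) / 2 + 1 = t by omega, two_mul]

lemma aMax_le (m d : ℕ) : aMax (m + 1) (d + 2) ≤ (d + m + 1).choose (m + 1) + 1 := by
  rw [aMax_eq_sum m (Nat.le_add_left 2 d), Finset.sum_range_succ]
  have hlast : (min (d + 1) (d + 2 - 1 - (d + 1)) + m).choose m = 1 := by simp
  have hle : ∑ i ∈ Finset.range (d + 1), (min i (d + 2 - 1 - i) + m).choose m ≤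
      ∑ i ∈ Finset.range (d + 1), (i + m).choose m := by
    gcongr
    exact min_le_left _ _
  rw [sum_range_choose_add, Nat.add_right_comm] at hle
  omega

lemma dominates_Pmid_Qpart_aMax (m d : ℕ) :
    Dominates (Pmid (m + 2) (d + 2))
      (Qpart (2 * (d + m + 3).choose (m + 2)) (aMax (m + 2) (d + 2))) := by
  have hsum : (Pmid (m + 2) (d + 2)).sum = 2 * (d + m + 3).choose (m + 2) := by
    rw [sum_Pmid, show d + 2 + m + 1 = d + m + 3 by omega]
  have hcard : (Pmid (m + 2) (d + 2)).card = 2 * (d + m + 2).choose (m + 1) := by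
    rw [card_Pmid, Nat.add_right_comm]
  have haMax : aMax (m + 2) (d + 2) ≤ (d + m + 2).choose (m + 2) + 1 := aMax_le (m + 1) d
  have hpascal : (d + m + 3).choose (m + 2) =
      (d + m + 2).choose (m + 1) + (d + m + 2).choose (m + 2) := Nat.choose_succ_succ' _ _
  have hpos₁ : 0 < (d + m + 2).choose (m + 1) := Nat.choose_pos (by omega)
  have hpos₂ : 0 < (d + m + 2).choose (m + 2) := Nat.choose_pos (by omega)
  exact dominates_Qpart_of_card_add_le hsum (by omega) (by omega)

/-- Corollary 3.4: the possible linear Jordan types of a full Perazzo algebra form a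
chain in the dominance order:
`(2^d, 1^{D-2d}) ≤ (2^{d+1}, 1^{D-2(d+1)}) ≤ ⋯ ≤ (2^{a_max}, 1^{D-2a_max}) ≤ P_mid ≤ P_max`. -/
theorem jordanTypes_fullPerazzo_chain (m d : ℕ) (hm : 2 ≤ m) (hd : 3 ≤ d)
    (D : ℕ) (hD : D = 2 * Nat.choose (d + m - 1) m) :
    (∀ a : ℕ, d ≤ a → a < aMax m d → Dominates (Qpart D (a + 1)) (Qpart D a)) ∧
    Dominates (Pmid m d) (Qpart D (aMax m d)) ∧
    Dominates (Pmax m d) (Pmid m d) := by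
  obtain ⟨m, rfl⟩ := Nat.exists_eq_add_of_le' hm
  obtain ⟨d, rfl⟩ := Nat.exists_eq_add_of_le' (Nat.le_of_succ_le hd)
  obtain rfl : D = 2 * (d + m + 3).choose (m + 2) := by
    rw [hD]
    congr 2
    omega
  exact ⟨fun a _ _ => dominates_Qpart_of_le _ a.le_succ, dominates_Pmid_Qpart_aMax m d,
    dominates_Pmax_Pmid m d⟩
end
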